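/- Let Γ ⊆ PGL₃(ℂ) be a finite subgroup of order m. Then there exists a homogeneous polynomial Φ ∈ ℂ[x,y,z] of degree 4m defining a smooth plane curve whose stabilizer is exactly Γ: an element g ∈ PGL₃(ℂ) satisfies that Φ ∘ ĝ is a nonzero scalar multiple of Φ (for a linear lift ĝ ∈ GL₃(ℂ) of g) if and only if g ∈ Γ. -/

import Mathlib

open MvPolynomial
open scoped MatrixGroups

noncomputable section

/-- Substitution of a linear change of variables into a polynomial in three variables:
`Φ ↦ Φ ∘ M`. -/
def substMat (M : Matrix (Fin 3) (Fin 3) ℂ) :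
    MvPolynomial (Fin 3) ℂ →ₐ[ℂ] MvPolynomial (Fin 3) ℂ :=
  aeval fun i => ∑ j, C (M i j) * X j

/-- The projective linear group `PGL₃(ℂ)`. -/
abbrev PGL3 := GL (Fin 3) ℂ ⧸ Subgroup.center (GL (Fin 3) ℂ)

/-- `Φ` defines a smooth plane curve: the only common zero of the three partial
derivatives in `ℂ³` is the origin. -/
def SmoothCurve (Φ : MvPolynomial (Fin 3) ℂ) : Prop :=
  ∀ q : Fin 3 → ℂ, (∀ i, eval q (pderiv i Φ) = 0) → q = 0

/-- `g ∈ PGL₃(ℂ)` stabilizes the curve `Φ = 0`: for a (hence any) linear lift `glift ∈ GL₃(ℂ)`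
of `g`, the polynomial `Φ ∘ glift` is a nonzero scalar multiple of `Φ`. -/
def ProjStab (Φ : MvPolynomial (Fin 3) ℂ) (g : PGL3) : Prop :=
  ∃ glift : GL (Fin 3) ℂ, QuotientGroup.mk glift = g ∧ ∃ c : ℂ, c ≠ 0 ∧ substMat (↑glift) Φ = c • Φ

/-!
The norm `N Q` of a quartic `Q` under `Γ`, the product of its `m` translates, is a form of degree
`4m` which `Γ` multiplies by a character independent of `Q`. So the norms of quartics span a linear
system of `Γ`-semi-invariant forms; it has no base points, and by Bertini's theorem its general
member is smooth.

If `Q` is irreducible, smooth and without nontrivial automorphisms, then the stabilizer of `N Q` is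
exactly `Γ`, by unique factorization. The curve `N Q = 0` itself is singular if `m > 1`, but its
multiplicity at any point is at most `m`, which is less than half the degree. This bounds the
condition numbers of the unimodular matrices stabilizing a form near `N Q`, so by compactness the
stabilizers of forms close to `N Q` are contained in any given neighbourhood of that of `N Q`. Since
`SL₃(ℂ)` has no small subgroups, a stabilizer that contains `Γ` and is close to it is equal to `Γ`.
Hence a smooth member of the linear system close enough to `N Q` is as desired.
-/

section Derivations

open scoped TensorProduct

theorem mapBaseChange_injective_of_formallySmooth (k S K : Type*) [CommRing k] [CommRing S]
    [CommRing K] [Algebra k S] [Algebra S K] [Algebra k K] [IsScalarTower k S K]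
    [Algebra.FormallySmooth S K] :
    Function.Injective (KaehlerDifferential.mapBaseChange k S K) := by
  have : Subsingleton (Algebra.H1Cotangent S K) :=
    Algebra.FormallySmooth.subsingleton_h1Cotangent
  rw [injective_iff_map_eq_zero]
  intro z hz
  obtain ⟨y, rfl⟩ := (Algebra.H1Cotangent.exact_δ_mapBaseChange k S K z).1 hz
  rw [Subsingleton.elim y 0, map_zero]

theorem exists_derivation_extending {k S K : Type*} [CommRing k] [CommRing S] [Field K]
    [Algebra k S] [Algebra S K] [Algebra k K] [IsScalarTower k S K] [Algebra.FormallySmooth S K]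
    (d : Derivation k S K) : ∃ D : Derivation k K K, ∀ s, D (algebraMap S K s) = d s := by
  obtain ⟨r, hr⟩ := LinearMap.exists_leftInverse_of_injective _
    (LinearMap.ker_eq_bot.2 (mapBaseChange_injective_of_formallySmooth k S K))
  let f : K ⊗[S] Ω[S⁄k] →ₗ[K] K := d.liftKaehlerDifferential.liftBaseChange K
  refine ⟨(f ∘ₗ r).compDer (KaehlerDifferential.D k K), fun s ↦ ?_⟩
  have hD : KaehlerDifferential.D k K (algebraMap S K s) =
      KaehlerDifferential.mapBaseChange k S K (1 ⊗ₜ KaehlerDifferential.D k S s) := by simp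
  have hrs := LinearMap.congr_fun hr (1 ⊗ₜ KaehlerDifferential.D k S s)
  rw [LinearMap.comp_apply, LinearMap.id_apply] at hrs
  simp [hD, -KaehlerDifferential.mapBaseChange_tmul, hrs, f]

theorem formallySmooth_of_field_extension (L K : Type*) [Field L] [CharZero L] [Field K]
    [Algebra L K] : Algebra.FormallySmooth L K := by
  obtain ⟨s, y, hs⟩ := exists_isTranscendenceBasis' L K
  have := hs.isAlgebraic_field
  exact Algebra.FormallySmooth.of_algebraicIndependent_of_isSeparable hs.1

theorem exists_derivation_eq_single {k K ι : Type*} [Field k] [CharZero k] [Field K] [Algebra k K]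
    [DecidableEq ι] {x : ι → K} (hx : AlgebraicIndependent k x) (i : ι) :
    ∃ D : Derivation k K K, ∀ j, D (x j) = (Pi.single i 1 : ι → K) j := by
  let S := MvPolynomial ι k
  let L := FractionRing S
  let _ : Algebra S K := (aeval x).toAlgebra
  have : IsScalarTower k S K := IsScalarTower.of_algebraMap_eq' (aeval x).comp_algebraMap.symm
  have : FaithfulSMul S K := (faithfulSMul_iff_algebraMap_injective S K).2 hx
  let _ : Algebra L K := FractionRing.liftAlgebra S K
  have : CharZero L := charZero_of_injective_algebraMap (IsFractionRing.injective S L)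
  have : Algebra.FormallySmooth L K := formallySmooth_of_field_extension L K
  have : Algebra.FormallyEtale S L := Algebra.FormallyEtale.of_isLocalization (nonZeroDivisors S)
  have : Algebra.FormallySmooth S K := Algebra.FormallySmooth.comp S L K
  obtain ⟨D, hD⟩ := exists_derivation_extending (mkDerivation k (Pi.single i (1 : K)))
  refine ⟨D, fun j ↦ ?_⟩
  rw [← mkDerivation_X k (Pi.single i (1 : K)), ← hD (X j)]
  exact congrArg D (aeval_X x j).symm

theorem derivation_apply_algHom {σ k A : Type*} [Fintype σ] [CommRing k] [CommRing A] [Algebra k A]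
    (φ : MvPolynomial σ k →ₐ[k] A) (D : Derivation k A A) (P : MvPolynomial σ k) :
    D (φ P) = ∑ v, φ (pderiv v P) * D (φ (X v)) := by
  classical
  induction P using MvPolynomial.induction_on with
  | C a => simp [← algebraMap_eq]
  | add p q hp hq => simp only [map_add, hp, hq, add_mul, Finset.sum_add_distrib]
  | mul_X p n hp =>
    simp only [map_mul, Derivation.leibniz, hp, pderiv_X, map_add, smul_eq_mul, add_mul,
      Finset.sum_add_distrib, Finset.mul_sum]
    congr 1
    · rw [Finset.sum_eq_single n] <;> simp +contextual [eq_comm]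
    · exact Finset.sum_congr rfl fun v _ ↦ by ring

end Derivations

section Bertini

theorem exists_ne_zero_forall_minimalPrimes_mem {k ι σ : Type*} [Field k] [Finite ι]
    [Finite σ] (J : Ideal (MvPolynomial (σ ⊕ ι) k)) :
    ∃ h : MvPolynomial ι k, h ≠ 0 ∧ ∀ p ∈ J.minimalPrimes,
      p.comap (rename Sum.inr : MvPolynomial ι k →ₐ[k] _) ≠ ⊥ → rename Sum.inr h ∈ p := by
  classical
  have hfin := Ideal.finite_minimalPrimes_of_isNoetherianRing _ J
  have hex (p : Ideal (MvPolynomial (σ ⊕ ι) k)) : ∃ h : MvPolynomial ι k, h ≠ 0 ∧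
      (p.comap (rename Sum.inr : MvPolynomial ι k →ₐ[k] _) ≠ ⊥ → rename Sum.inr h ∈ p) := by
    by_cases hp : p.comap (rename Sum.inr : MvPolynomial ι k →ₐ[k] _) = ⊥
    · exact ⟨1, one_ne_zero, absurd hp⟩
    · obtain ⟨h, hmem, hne⟩ := Submodule.exists_mem_ne_zero_of_ne_bot hp
      exact ⟨h, hne, fun _ ↦ hmem⟩
  choose h hne hmem using hex
  refine ⟨∏ p ∈ hfin.toFinset, h p, Finset.prod_ne_zero_iff.2 fun p _ ↦ hne p, fun p hp hp' ↦ ?_⟩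
  exact Ideal.mem_of_dvd p
    (map_dvd _ (Finset.dvd_prod_of_mem h (hfin.mem_toFinset.2 hp))) (hmem p hp')

variable {k ι σ : Type*} [Field k] [Fintype ι]

/-- The general member `∑ tᵢ Fᵢ` of the linear system spanned by the `F i`, as a polynomial in the
variables of the `F i` together with the parameters `tᵢ`. -/
def universalMember (F : ι → MvPolynomial σ k) : MvPolynomial (σ ⊕ ι) k :=
  ∑ i, X (Sum.inr i) * rename Sum.inl (F i)

theorem pderiv_inl_universalMember (F : ι → MvPolynomial σ k) (v : σ) :
    pderiv (Sum.inl v) (universalMember F) =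
      ∑ i, X (Sum.inr i) * rename Sum.inl (pderiv v (F i)) := by
  simp only [universalMember, map_sum, Derivation.leibniz]
  refine Finset.sum_congr rfl fun i _ ↦ ?_
  rw [pderiv_rename Sum.inl_injective, pderiv_X_of_ne (by simp), smul_zero, add_zero, smul_eq_mul]

theorem pderiv_inr_universalMember (F : ι → MvPolynomial σ k) (j : ι) :
    pderiv (Sum.inr j) (universalMember F) = rename Sum.inl (F j) := by
  classical
  have hF (i : ι) : pderiv (Sum.inr j : σ ⊕ ι) (rename Sum.inl (F i)) = 0 :=
    pderiv_eq_zero_of_notMem_vars fun h ↦ by simpa using vars_rename Sum.inl (F i) h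
  simp only [universalMember, map_sum, Derivation.leibniz, hF, smul_zero, zero_add, pderiv_X]
  rw [Finset.sum_eq_single j] <;> simp +contextual

/-- The ideal of the universal singular locus of the linear system spanned by the `F i`. -/
def singularIdeal (F : ι → MvPolynomial σ k) : Ideal (MvPolynomial (σ ⊕ ι) k) :=
  Ideal.span (Set.range fun v ↦ pderiv (Sum.inl v) (universalMember F))

theorem pderiv_inl_universalMember_mem (F : ι → MvPolynomial σ k) (v : σ) :
    pderiv (Sum.inl v) (universalMember F) ∈ singularIdeal F :=
  Ideal.subset_span ⟨v, rfl⟩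

variable [Finite σ] [CharZero k] {d : ℕ} {F : ι → MvPolynomial σ k}

theorem universalMember_mem_singularIdeal (hd : d ≠ 0) (hF : ∀ i, (F i).IsHomogeneous d) :
    universalMember F ∈ singularIdeal F := by
  cases nonempty_fintype σ
  have euler : (d : k) • universalMember F =
      ∑ v, X (Sum.inl v) * pderiv (Sum.inl v) (universalMember F) := by
    simp only [pderiv_inl_universalMember, Finset.mul_sum]
    rw [Finset.sum_comm, universalMember, Finset.smul_sum]
    refine Finset.sum_congr rfl fun i _ ↦ ?_
    have := congrArg (rename (Sum.inl : σ → σ ⊕ ι)) (hF i).sum_X_mul_pderiv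
    simp only [map_sum, map_mul, map_nsmul, rename_X] at this
    rw [Nat.cast_smul_eq_nsmul, ← mul_smul_comm, ← this, Finset.mul_sum]
    exact Finset.sum_congr rfl fun v _ ↦ mul_left_comm _ _ _
  have hmem : (d : k) • universalMember F ∈ singularIdeal F := euler ▸
    Ideal.sum_mem _ fun v _ ↦ Ideal.mul_mem_left _ _ (pderiv_inl_universalMember_mem F v)
  exact ((singularIdeal F).restrictScalars k).smul_mem_iff (by exact_mod_cast hd) |>.1 hmem

/-- A component of the universal singular locus dominating the parameter space lies over the base
locus: on its function field the parameters are independent, so some derivation `D` has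
`D tⱼ = δᵢⱼ`, and `0 = DΦ = Fᵢ` because `Φ` and its partials in the `x`-variables vanish there. -/
theorem rename_mem_of_singularIdeal_le (hd : d ≠ 0) (hF : ∀ i, (F i).IsHomogeneous d)
    {p : Ideal (MvPolynomial (σ ⊕ ι) k)} [hp : p.IsPrime] (hFp : singularIdeal F ≤ p)
    (hdom : p.comap (rename Sum.inr : MvPolynomial ι k →ₐ[k] _) = ⊥) (i : ι) :
    rename Sum.inl (F i) ∈ p := by
  classical
  cases nonempty_fintype σ
  let φ : MvPolynomial (σ ⊕ ι) k →ₐ[k] FractionRing (MvPolynomial (σ ⊕ ι) k ⧸ p) :=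
    (IsScalarTower.toAlgHom k (MvPolynomial (σ ⊕ ι) k ⧸ p) _).comp (Ideal.Quotient.mkₐ k p)
  have hφ (P) : φ P = 0 ↔ P ∈ p :=
    (map_eq_zero_iff _ (IsFractionRing.injective (MvPolynomial (σ ⊕ ι) k ⧸ p) _)).trans
      Ideal.Quotient.eq_zero_iff_mem
  have hind : AlgebraicIndependent k fun j : ι ↦ φ (X (Sum.inr j)) := by
    refine algebraicIndependent_iff.2 fun P hP ↦ ?_
    have hφP : aeval (fun j : ι ↦ φ (X (Sum.inr j))) P = φ (rename Sum.inr P) := by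
      rw [← AlgHom.comp_apply]
      congr 1
      ext j
      simp
    rw [hφP, hφ] at hP
    exact (Submodule.mem_bot _).1 (hdom ▸ Ideal.mem_comap.2 hP)
  obtain ⟨D, hD⟩ := exists_derivation_eq_single hind i
  have hDΦ := derivation_apply_algHom φ D (universalMember F)
  rw [(hφ _).2 (hFp (universalMember_mem_singularIdeal hd hF)), map_zero, Fintype.sum_sum_type,
    Finset.sum_eq_zero fun v _ ↦ by
      rw [(hφ _).2 (hFp (pderiv_inl_universalMember_mem F v)), zero_mul]] at hDΦ
  simpa [hD, pderiv_inr_universalMember, Pi.single_apply, ← hφ] using hDΦ.symm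

theorem exists_ne_zero_forall_smooth (hd : d ≠ 0) (hF : ∀ i, (F i).IsHomogeneous d)
    (hbase : ∀ q : σ → k, (∀ i, eval q (F i) = 0) → q = 0) :
    ∃ h : MvPolynomial ι k, h ≠ 0 ∧ ∀ t : ι → k, eval t h ≠ 0 →
      ∀ q : σ → k, (∀ v, eval q (pderiv v (∑ i, t i • F i)) = 0) → q = 0 := by
  obtain ⟨h, hne, hmem⟩ := exists_ne_zero_forall_minimalPrimes_mem (singularIdeal F)
  refine ⟨h, hne, fun t ht q hq ↦ ?_⟩
  let ev : MvPolynomial (σ ⊕ ι) k →ₐ[k] k := aeval (Sum.elim q t)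
  have ev_inl (P) : ev (rename Sum.inl P) = eval q P := by
    simp only [ev, aeval_rename, Sum.elim_comp_inl]; rfl
  have ev_inr (P) : ev (rename Sum.inr P) = eval t P := by
    simp only [ev, aeval_rename, Sum.elim_comp_inr]; rfl
  have hJ : singularIdeal F ≤ RingHom.ker ev := by
    refine Ideal.span_le.2 (Set.range_subset_iff.2 fun v ↦ ?_)
    have hX (i) : ev (X (Sum.inr i)) = t i := by simp [ev]
    simpa [pderiv_inl_universalMember, ev_inl, smul_eval, hX] using hq v
  have : (RingHom.ker ev).IsPrime := RingHom.ker_isPrime _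
  obtain ⟨p, hp, hpev⟩ := Ideal.exists_minimalPrimes_le hJ
  have := hp.1.1
  by_cases hdom : p.comap (rename Sum.inr : MvPolynomial ι k →ₐ[k] _) = ⊥
  · exact hbase q fun i ↦
      (ev_inl _).symm.trans (hpev (rename_mem_of_singularIdeal_le hd hF hp.1.2 hdom i))
  · exact absurd ((ev_inr h).symm.trans (hpev (hmem p hp hdom))) ht

end Bertini

theorem dense_eval_ne_zero {𝕜 ι : Type*} [NontriviallyNormedField 𝕜] [Finite ι]
    {h : MvPolynomial ι 𝕜} (hh : h ≠ 0) : Dense {t : ι → 𝕜 | eval t h ≠ 0} := by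
  cases nonempty_fintype ι
  refine Metric.dense_iff.2 fun x r hr ↦ ?_
  by_contra hempty
  refine hh (funext_set (fun i ↦ Metric.ball (x i) r)
    (fun i ↦ infinite_of_mem_nhds (x i) (Metric.ball_mem_nhds _ hr)) fun t ht ↦ ?_)
  rw [map_zero]
  by_contra hne
  exact hempty ⟨t, ball_pi x hr ▸ ht, hne⟩

/-- Bertini's theorem. -/
theorem dense_smooth_members {ι σ : Type*} [Fintype ι] [Finite σ] {d : ℕ} (hd : d ≠ 0)
    {F : ι → MvPolynomial σ ℂ} (hF : ∀ i, (F i).IsHomogeneous d)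
    (hbase : ∀ q : σ → ℂ, (∀ i, eval q (F i) = 0) → q = 0) :
    Dense {t : ι → ℂ | ∀ q : σ → ℂ, (∀ v, eval q (pderiv v (∑ i, t i • F i)) = 0) → q = 0} :=
  have ⟨_, hne, hsmooth⟩ := exists_ne_zero_forall_smooth hd hF hbase
  (dense_eval_ne_zero hne).mono hsmooth

section OrderOfVanishing

variable {σ R : Type*} [CommRing R]

/-- The Taylor expansion `P(p + T x)` of `P` at the point `p`, as a polynomial in `T` whose
coefficients are polynomials in the direction `x`. -/
def taylorAt (p : σ → R) : MvPolynomial σ R →ₐ[R] Polynomial (MvPolynomial σ R) :=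
  aeval fun i ↦ Polynomial.C (C (p i)) + Polynomial.X * Polynomial.C (X i)

theorem taylorAt_X (p : σ → R) (i : σ) :
    taylorAt p (X i) = Polynomial.C (C (p i)) + Polynomial.X * Polynomial.C (X i) :=
  aeval_X _ _

theorem eval_map_taylorAt (p w : σ → R) (z : R) (P : MvPolynomial σ R) :
    ((taylorAt p P).map (eval w)).eval z = eval (p + z • w) P := by
  induction P using MvPolynomial.induction_on with
  | C a => simp [← algebraMap_eq, Polynomial.algebraMap_apply]
  | add P Q hP hQ => simp only [map_add, Polynomial.map_add, Polynomial.eval_add, hP, hQ]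
  | mul_X P i hP => simp [taylorAt_X, hP, mul_comm z]

theorem coeff_zero_taylorAt (p : σ → R) (P : MvPolynomial σ R) :
    (taylorAt p P).coeff 0 = C (eval p P) := by
  induction P using MvPolynomial.induction_on with
  | C a => simp [← algebraMap_eq, Polynomial.algebraMap_apply]
  | add P Q hP hQ => simp only [map_add, Polynomial.coeff_add, hP, hQ]
  | mul_X P i hP => simp [taylorAt_X, Polynomial.mul_coeff_zero, hP]

theorem coeff_one_taylorAt [Fintype σ] (p : σ → R) (P : MvPolynomial σ R) :
    (taylorAt p P).coeff 1 = ∑ v, C (eval p (pderiv v P)) * X v := by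
  have hder := congrArg (fun f ↦ f.coeff 0) <| derivation_apply_algHom (taylorAt p)
    ((Polynomial.derivative' (R := MvPolynomial σ R)).restrictScalars R) P
  simpa [taylorAt_X, Polynomial.finsetSum_coeff, Polynomial.mul_coeff_zero, coeff_zero_taylorAt,
    Polynomial.derivative'_apply, Polynomial.coeff_derivative] using hder

/-- The order of vanishing of `P` at `p`, infinite for `P = 0`. -/
def orderAt (p : σ → R) (P : MvPolynomial σ R) : ℕ∞ :=
  (taylorAt p P).trailingDegree

theorem orderAt_prod [IsDomain R] {α : Type*} (s : Finset α) (p : σ → R)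
    (P : α → MvPolynomial σ R) : orderAt p (∏ a ∈ s, P a) = ∑ a ∈ s, orderAt p (P a) := by
  classical
  induction s using Finset.induction_on with
  | empty => simp [orderAt]
  | insert a s ha ih =>
    rw [Finset.prod_insert ha, Finset.sum_insert ha, ← ih]
    simp only [orderAt, map_mul, Polynomial.trailingDegree_mul]

theorem orderAt_le_one [Finite σ] {p : σ → R} {P : MvPolynomial σ R} {v : σ}
    (hv : eval p (pderiv v P) ≠ 0) : orderAt p P ≤ 1 := by
  classical
  cases nonempty_fintype σ
  refine Polynomial.trailingDegree_le_of_ne_zero fun h ↦ hv ?_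
  rw [coeff_one_taylorAt] at h
  simpa [coeff_sum, coeff_C_mul, coeff_X, Finsupp.single_left_inj] using
    congrArg (coeff (Finsupp.single v 1)) h

theorem exists_eval_coeff_taylorAt_ne_zero [IsDomain R] [Infinite R] {p : σ → R}
    {P : MvPolynomial σ R} {m : ℕ} (h : orderAt p P ≤ m) :
    ∃ j ≤ m, ∃ w, eval w ((taylorAt p P).coeff j) ≠ 0 := by
  have hP : taylorAt p P ≠ 0 := fun h0 ↦ by simp [orderAt, h0] at h
  refine ⟨(taylorAt p P).natTrailingDegree, ?_, ?_⟩
  · exact_mod_cast (Polynomial.trailingDegree_eq_natTrailingDegree hP).symm.le.trans h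
  · by_contra! hw
    exact hP <| Polynomial.trailingCoeff_eq_zero.1 <| MvPolynomial.funext fun w ↦
      (hw w).trans (map_zero _).symm

theorem continuous_eval_coeff_taylorAt [TopologicalSpace R] [IsTopologicalRing R]
    (P : MvPolynomial σ R) (w : σ → R) (j : ℕ) :
    Continuous fun p : σ → R ↦ eval w ((taylorAt p P).coeff j) := by
  induction P using MvPolynomial.induction_on generalizing j with
  | C a => simpa [← algebraMap_eq, Polynomial.algebraMap_apply] using continuous_const
  | add P Q hP hQ =>
    simp only [map_add, Polynomial.coeff_add]
    fun_prop
  | mul_X P i hP =>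
    simp only [map_mul, taylorAt_X, mul_add, ← mul_assoc, Polynomial.coeff_add,
      Polynomial.coeff_mul_C, map_add, eval_C, eval_X]
    cases j with
    | zero =>
      simp only [Polynomial.coeff_mul_X_zero, map_zero, zero_mul, add_zero]
      fun_prop
    | succ j =>
      simp only [Polynomial.coeff_mul_X]
      fun_prop

end OrderOfVanishing

theorem eval_smul_of_isHomogeneous {σ R : Type*} [CommSemiring R] {P : MvPolynomial σ R} {d : ℕ}
    (hP : P.IsHomogeneous d) (a : R) (x : σ → R) : eval (a • x) P = a ^ d * eval x P := by
  simp only [eval_eq, Finset.mul_sum]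
  refine Finset.sum_congr rfl fun s hs ↦ ?_
  simp only [hP.degree_eq_sum_deg_support hs, Pi.smul_apply, smul_eq_mul, mul_pow,
    Finset.prod_mul_distrib, Finset.prod_pow_eq_pow_sum]
  exact mul_left_comm _ _ _

section ConditionNumber

open Filter Topology

theorem iteratedDeriv_eval_zero {𝕜 : Type*} [NontriviallyNormedField 𝕜] (f : Polynomial 𝕜)
    (j : ℕ) : iteratedDeriv j (fun z ↦ f.eval z) 0 = j.factorial * f.coeff j := by
  have hiter : iteratedDeriv j (fun z ↦ f.eval z) =
      fun z ↦ (Polynomial.derivative^[j] f).eval z := by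
    induction j with
    | zero => simp
    | succ j ih =>
      rw [iteratedDeriv_succ, ih, Function.iterate_succ_apply']
      exact funext fun z ↦ Polynomial.deriv _
  simp [hiter, ← Polynomial.coeff_zero_eq_eval_zero, Polynomial.coeff_iterate_derivative,
    Nat.descFactorial_self]

theorem norm_coeff_mul_pow_le {f : Polynomial ℂ} {r K : ℝ} (hr : 0 < r)
    (hf : ∀ z : ℂ, ‖z‖ ≤ r → ‖f.eval z‖ ≤ K) (j : ℕ) : ‖f.coeff j‖ * r ^ j ≤ K := by
  have hcauchy := Complex.norm_iteratedDeriv_le_of_forall_mem_sphere_norm_le (c := 0) j hr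
    f.differentiable.diffContOnCl fun z hz ↦ hf z (mem_sphere_zero_iff_norm.1 hz).le
  rw [iteratedDeriv_eval_zero, norm_mul, Complex.norm_natCast, mul_div_assoc] at hcauchy
  have := le_of_mul_le_mul_left hcauchy (by exact_mod_cast j.factorial_pos)
  rwa [le_div_iff₀ (pow_pos hr j)] at this

variable {ι σ : Type*} [Fintype ι] [Fintype σ]

/-- A quantitative form of vanishing to order at most `m` at `p`: on the ball of radius `r ≤ 1`
around `p`, the supremum of `|P|` is at least `c r ^ m`. -/
def BoundedVanishingAt (c : ℝ) (m : ℕ) (P : MvPolynomial σ ℂ) (p : σ → ℂ) : Prop :=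
  ∀ r : ℝ, 0 < r → r ≤ 1 → ∀ K : ℝ, (∀ y, ‖y‖ ≤ r → ‖eval (p + y) P‖ ≤ K) → c * r ^ m ≤ K

theorem boundedVanishingAt_of_lt_norm_coeff {c : ℝ} {j m : ℕ} (hj : j ≤ m) {P : MvPolynomial σ ℂ}
    {p w : σ → ℂ} (h : c * (1 + ‖w‖) ^ j < ‖eval w ((taylorAt p P).coeff j)‖) :
    BoundedVanishingAt c m P p := by
  intro r hr0 hr1 K hK
  have hw : 0 < 1 + ‖w‖ := by positivity
  have hline : ∀ z : ℂ, ‖z‖ ≤ r / (1 + ‖w‖) →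
      ‖((taylorAt p P).map (eval w)).eval z‖ ≤ K := fun z hz ↦ by
    rw [eval_map_taylorAt]
    refine hK _ ?_
    calc ‖z • w‖ = ‖z‖ * ‖w‖ := norm_smul z w
      _ ≤ ‖z‖ * (1 + ‖w‖) := by gcongr; linarith
      _ ≤ r := (le_div_iff₀ hw).1 hz
  have hcauchy := norm_coeff_mul_pow_le (div_pos hr0 hw) hline j
  rw [Polynomial.coeff_map] at hcauchy
  have hK0 : 0 ≤ K := (norm_nonneg _).trans (hK 0 (by simpa using hr0.le))
  rcases le_or_gt c 0 with hc | hc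
  · exact (mul_nonpos_of_nonpos_of_nonneg hc (by positivity)).trans hK0
  calc c * r ^ m ≤ c * r ^ j := by gcongr c * ?_; exact pow_le_pow_of_le_one hr0.le hr1 hj
    _ = c * (1 + ‖w‖) ^ j * (r / (1 + ‖w‖)) ^ j := by
        rw [mul_assoc, ← mul_pow, mul_div_cancel₀ _ hw.ne']
    _ ≤ ‖eval w ((taylorAt p P).coeff j)‖ * (r / (1 + ‖w‖)) ^ j := by gcongr
    _ ≤ K := hcauchy

theorem eventually_boundedVanishingAt {F : ι → MvPolynomial σ ℂ} {t₀ : ι → ℂ} {p₀ : σ → ℂ} {m : ℕ}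
    (h : orderAt p₀ (∑ i, t₀ i • F i) ≤ m) :
    ∀ᶠ x : (ℝ × (ι → ℂ)) × (σ → ℂ) in 𝓝 ((0, t₀), p₀),
      BoundedVanishingAt x.1.1 m (∑ i, x.1.2 i • F i) x.2 := by
  obtain ⟨j, hj, w, hw⟩ := exists_eval_coeff_taylorAt_ne_zero h
  have hcont : Continuous fun x : (ℝ × (ι → ℂ)) × (σ → ℂ) ↦
      ‖eval w ((taylorAt x.2 (∑ i, x.1.2 i • F i)).coeff j)‖ := by
    simp only [map_sum, map_smul, Polynomial.finsetSum_coeff, Polynomial.coeff_smul, smul_eval]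
    exact (continuous_finsetSum _ fun i _ ↦ (by fun_prop : Continuous _).mul
      ((continuous_eval_coeff_taylorAt (F i) w j).comp continuous_snd)).norm
  have hlt : ∀ᶠ x : (ℝ × (ι → ℂ)) × (σ → ℂ) in 𝓝 ((0, t₀), p₀), x.1.1 * (1 + ‖w‖) ^ j <
      ‖eval w ((taylorAt x.2 (∑ i, x.1.2 i • F i)).coeff j)‖ :=
    ContinuousAt.eventually_lt (by fun_prop) hcont.continuousAt (by simpa using hw)
  exact hlt.mono fun x hx ↦ boundedVanishingAt_of_lt_norm_coeff hj hx

theorem exists_eventually_boundedVanishing {F : ι → MvPolynomial σ ℂ} {t₀ : ι → ℂ} {m : ℕ}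
    (h : ∀ p ≠ 0, orderAt p (∑ i, t₀ i • F i) ≤ m) :
    ∃ c > 0, ∀ᶠ t in 𝓝 t₀, ∀ p : σ → ℂ, ‖p‖ = 1 → BoundedVanishingAt c m (∑ i, t i • F i) p := by
  have hloc : ∀ᶠ x : ℝ × (ι → ℂ) in 𝓝 (0, t₀), ∀ p ∈ Metric.sphere (0 : σ → ℂ) 1,
      BoundedVanishingAt x.1 m (∑ i, x.2 i • F i) p :=
    (isCompact_sphere 0 1).eventually_forall_of_forall_eventually fun p hp ↦
      eventually_boundedVanishingAt (h p (ne_zero_of_mem_unit_sphere ⟨p, hp⟩))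
  obtain ⟨c, hc, hpos⟩ :=
    ((eventually_nhdsWithin_of_eventually_nhds hloc.curry_nhds).and
      (eventually_mem_nhdsWithin (a := (0 : ℝ)) (s := Set.Ioi 0))).exists
  exact ⟨c, hpos, hc.mono fun t ht p hp ↦ ht p (mem_sphere_zero_iff_norm.2 hp)⟩

attribute [local instance] Matrix.linftyOpNormedRing Matrix.linftyOpNormedAlgebra

open Matrix

variable [DecidableEq σ]

theorem exists_half_norm_lt_norm_mulVec {g : Matrix σ σ ℂ} (hg : g ≠ 0) :
    ∃ x : σ → ℂ, ‖x‖ ≤ 1 ∧ ‖g‖ / 2 < ‖g *ᵥ x‖ := by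
  have hpos : 0 < ‖g‖ := norm_pos_iff.2 hg
  rw [Matrix.linfty_opNorm_eq_opNorm] at hpos ⊢
  obtain ⟨x, hx, hlt⟩ := ContinuousLinearMap.exists_lt_apply_of_lt_opNorm _ (half_lt_self hpos)
  exact ⟨x, hx.le, hlt⟩

theorem one_le_norm_mul_norm [Nonempty σ] {g h : Matrix σ σ ℂ} (hgh : g * h = 1) :
    1 ≤ ‖g‖ * ‖h‖ := by
  simpa [hgh] using norm_mul_le g h

theorem exists_sphere_forall_mulVec_eq_add [Nonempty σ] {g h : Matrix σ σ ℂ} (hgh : g * h = 1) :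
    ∃ p : σ → ℂ, ‖p‖ = 1 ∧
      ∀ y, ‖y‖ ≤ (‖g‖ * ‖h‖)⁻¹ → ∃ z, ‖z‖ ≤ 3 / ‖g‖ ∧ g *ᵥ z = p + y := by
  have hκ : 0 < ‖g‖ * ‖h‖ := one_pos.trans_le (one_le_norm_mul_norm hgh)
  have hg0 : 0 < ‖g‖ := pos_of_mul_pos_left hκ (norm_nonneg h)
  obtain ⟨x, hx, hgx⟩ := exists_half_norm_lt_norm_mulVec (norm_pos_iff.1 hg0)
  have ha : 0 < ‖g *ᵥ x‖ := (half_pos hg0).trans hgx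
  refine ⟨(‖g *ᵥ x‖ : ℂ)⁻¹ • g *ᵥ x, by simp [norm_smul, ha.ne'], fun y hy ↦
    ⟨(‖g *ᵥ x‖ : ℂ)⁻¹ • x + h *ᵥ y, ?_, by
      rw [mulVec_add, mulVec_smul, mulVec_mulVec, hgh, one_mulVec]⟩⟩
  have hx' : ‖(‖g *ᵥ x‖ : ℂ)⁻¹ • x‖ ≤ (‖g‖ / 2)⁻¹ := by
    rw [norm_smul, norm_inv, Complex.norm_real, norm_norm]
    exact (mul_le_of_le_one_right (by positivity) hx).trans (by gcongr)
  have hy' : ‖h *ᵥ y‖ ≤ ‖g‖⁻¹ :=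
    calc ‖h *ᵥ y‖ ≤ ‖h‖ * ‖y‖ := Matrix.linfty_opNorm_mulVec h y
      _ ≤ ‖h‖ * (‖g‖ * ‖h‖)⁻¹ := by gcongr
      _ = ‖g‖⁻¹ := by
        rw [mul_inv, mul_left_comm, mul_inv_cancel₀ (right_ne_zero_of_mul hκ.ne'), mul_one]
  calc _ ≤ (‖g‖ / 2)⁻¹ + ‖g‖⁻¹ := (norm_add_le _ _).trans (add_le_add hx' hy')
    _ = 3 / ‖g‖ := by ring

theorem BoundedVanishingAt.le_of_norm_eval_mulVec_le [Nonempty σ] {c K : ℝ} {m d : ℕ}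
    {P : MvPolynomial σ ℂ} (hP : P.IsHomogeneous d)
    (hc : ∀ p : σ → ℂ, ‖p‖ = 1 → BoundedVanishingAt c m P p) {g h : Matrix σ σ ℂ} (hgh : g * h = 1)
    (hK : ∀ x : σ → ℂ, ‖x‖ ≤ 1 → ‖eval (g *ᵥ x) P‖ ≤ K) :
    c * (‖g‖ / 3) ^ d ≤ K * (‖g‖ * ‖h‖) ^ m := by
  have hκ := one_le_norm_mul_norm hgh
  have hκ0 := one_pos.trans_le hκ
  have hg0 : 0 < ‖g‖ := pos_of_mul_pos_left hκ0 (norm_nonneg h)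
  obtain ⟨p, hp, hball⟩ := exists_sphere_forall_mulVec_eq_add hgh
  have hbound : ∀ y, ‖y‖ ≤ (‖g‖ * ‖h‖)⁻¹ → ‖eval (p + y) P‖ ≤ (3 / ‖g‖) ^ d * K := by
    intro y hy
    obtain ⟨z, hz, hgz⟩ := hball y hy
    have hR : ((3 / ‖g‖ : ℝ) : ℂ) ≠ 0 := by exact_mod_cast (div_pos three_pos hg0).ne'
    have hsmul : g *ᵥ z = ((3 / ‖g‖ : ℝ) : ℂ) • g *ᵥ (((3 / ‖g‖ : ℝ) : ℂ)⁻¹ • z) := by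
      rw [mulVec_smul, smul_inv_smul₀ hR]
    rw [← hgz, hsmul, eval_smul_of_isHomogeneous hP, norm_mul, norm_pow, Complex.norm_real,
      Real.norm_of_nonneg (by positivity)]
    gcongr
    refine hK _ ?_
    rw [norm_smul, norm_inv, Complex.norm_real, Real.norm_of_nonneg (by positivity)]
    exact inv_mul_le_one_of_le₀ hz (by positivity)
  have := hc p hp _ (inv_pos.2 hκ0) (inv_le_one_of_one_le₀ hκ) _ hbound
  calc c * (‖g‖ / 3) ^ d
      = c * (‖g‖ * ‖h‖)⁻¹ ^ m * ((‖g‖ / 3) ^ d * (‖g‖ * ‖h‖) ^ m) := by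
        rw [inv_pow, mul_comm (_ ^ d), mul_assoc, inv_mul_cancel_left₀ (pow_pos hκ0 m).ne']
    _ ≤ (3 / ‖g‖) ^ d * K * ((‖g‖ / 3) ^ d * (‖g‖ * ‖h‖) ^ m) := by gcongr
    _ = (3 / ‖g‖ * (‖g‖ / 3)) ^ d * (K * (‖g‖ * ‖h‖) ^ m) := by
        rw [mul_pow (3 / ‖g‖), mul_mul_mul_comm]
    _ = K * (‖g‖ * ‖h‖) ^ m := by
      rw [div_mul_div_cancel₀ hg0.ne', div_self three_ne_zero, one_pow, one_mul]

/-- If `P ∘ g = l P` and `|P| ≤ K` on the unit ball, the bounds for `g` and `g⁻¹` involve `|l| K`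
and `|l|⁻¹ K`, so `l` drops out of their product. -/
theorem BoundedVanishingAt.norm_mul_norm_inv_le [Nonempty σ] {c K : ℝ} (hc0 : 0 < c) {m d : ℕ}
    (hmd : 2 * m < d) {P : MvPolynomial σ ℂ} (hP : P.IsHomogeneous d)
    (hc : ∀ p : σ → ℂ, ‖p‖ = 1 → BoundedVanishingAt c m P p)
    (hK : ∀ x : σ → ℂ, ‖x‖ ≤ 1 → ‖eval x P‖ ≤ K) {g h : Matrix σ σ ℂ} (hgh : g * h = 1)
    {l : ℂ} (hl : l ≠ 0) (hg : ∀ x, eval (g *ᵥ x) P = l * eval x P) :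
    ‖g‖ * ‖h‖ ≤ 9 ^ d * (K / c) ^ 2 := by
  have hhg : h * g = 1 := mul_eq_one_comm.1 hgh
  have hκ := one_le_norm_mul_norm hgh
  have hK0 : 0 ≤ K := (norm_nonneg _).trans (hK 0 (by simp))
  have hh (x) : eval (h *ᵥ x) P = l⁻¹ * eval x P := by
    rw [eq_inv_mul_iff_mul_eq₀ hl, ← hg, mulVec_mulVec, hgh, one_mulVec]
  have bound_g := le_of_norm_eval_mulVec_le hP hc hgh (K := ‖l‖ * K) fun x hx ↦ by
    rw [hg, norm_mul]
    gcongr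
    exact hK x hx
  have bound_h := le_of_norm_eval_mulVec_le hP hc hhg (K := ‖l‖⁻¹ * K) fun x hx ↦ by
    rw [hh, norm_mul, norm_inv]
    gcongr
    exact hK x hx
  rw [mul_comm ‖h‖] at bound_h
  set κ := ‖g‖ * ‖h‖ with hκ_def
  have hl' : ‖l‖ ≠ 0 := norm_ne_zero_iff.2 hl
  have hprod : c ^ 2 * (κ / 9) ^ d ≤ K ^ 2 * κ ^ (2 * m) :=
    calc c ^ 2 * (κ / 9) ^ d = c * (‖g‖ / 3) ^ d * (c * (‖h‖ / 3) ^ d) := by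
          rw [mul_mul_mul_comm, ← mul_pow, hκ_def]; ring
      _ ≤ ‖l‖ * K * κ ^ m * (‖l‖⁻¹ * K * κ ^ m) := by gcongr
      _ = K ^ 2 * κ ^ (2 * m) := by field_simp; ring
  have hκ0 : 0 < κ := one_pos.trans_le hκ
  refine le_of_mul_le_mul_right ?_ (pow_pos hκ0 (2 * m))
  calc κ * κ ^ (2 * m) ≤ κ ^ d := by rw [← pow_succ']; exact pow_le_pow_right₀ hκ hmd
    _ = 9 ^ d / c ^ 2 * (c ^ 2 * (κ / 9) ^ d) := by rw [div_pow]; field_simp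
    _ ≤ 9 ^ d / c ^ 2 * (K ^ 2 * κ ^ (2 * m)) := by gcongr
    _ = 9 ^ d * (K / c) ^ 2 * κ ^ (2 * m) := by ring

end ConditionNumber

section NoSmallSubgroups

open Topology
open scoped Pointwise

theorem eq_one_of_forall_norm_pow_sub_one_le {A : Type*} [NormedRing A] [NormedAlgebra ℝ A] {a : A}
    (ha : ∀ n : ℕ, ‖a ^ n - 1‖ ≤ 1 / 2) : a = 1 := by
  have square (b : A) (hb : ‖b - 1‖ ≤ 1 / 2) : 3 / 2 * ‖b - 1‖ ≤ ‖b ^ 2 - 1‖ :=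
    calc 3 / 2 * ‖b - 1‖ ≤ 2 * ‖b - 1‖ - ‖b - 1‖ * ‖b - 1‖ := by nlinarith [norm_nonneg (b - 1)]
      _ ≤ ‖(2 : ℝ) • (b - 1)‖ - ‖(b - 1) * (b - 1)‖ := by
        rw [norm_smul, Real.norm_ofNat]
        gcongr
        exact norm_mul_le _ _
      _ ≤ ‖(2 : ℝ) • (b - 1) + (b - 1) * (b - 1)‖ := norm_sub_le_norm_add _ _
      _ = ‖b ^ 2 - 1‖ := by
        rw [two_smul]
        congr 1
        noncomm_ring
  have growth (k : ℕ) : (3 / 2) ^ k * ‖a - 1‖ ≤ ‖a ^ 2 ^ k - 1‖ := by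
    induction k with
    | zero => simp
    | succ k ih =>
      rw [pow_succ' (3 / 2 : ℝ), mul_assoc, pow_succ 2 k, pow_mul]
      exact (mul_le_mul_of_nonneg_left ih (by norm_num)).trans (square _ (ha _))
  by_contra hne
  have hpos : 0 < ‖a - 1‖ := norm_pos_iff.2 (sub_ne_zero.2 hne)
  obtain ⟨k, hk⟩ := pow_unbounded_of_one_lt (1 / 2 / ‖a - 1‖) (by norm_num : (1 : ℝ) < 3 / 2)
  exact absurd ((growth k).trans (ha _)) ((div_lt_iff₀ hpos).1 hk).not_ge

/-- If `H` lies in `N W` for a small neighbourhood `W` of `1`, then `H ∩ W` is a subgroup: a product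
of elements of `W` which is of the form `n w` has `n` close to `1`, hence `n = 1`. -/
theorem exists_isOpen_forall_subgroup_eq {G : Type*} [Group G] [TopologicalSpace G]
    [IsTopologicalGroup G] [T1Space G] {V : Set G} (hV : V ∈ 𝓝 1)
    (hnss : ∀ H : Subgroup G, (H : Set G) ⊆ V → H = ⊥) (N : Subgroup G) [Finite N] :
    ∃ U : Set G, IsOpen U ∧ (N : Set G) ⊆ U ∧
      ∀ H : Subgroup G, N ≤ H → (H : Set G) ⊆ U → H = N := by
  have hN : ((N : Set G) \ {1})ᶜ ∈ 𝓝 1 :=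
    ((Set.toFinite (N : Set G)).sdiff.isClosed.isOpen_compl).mem_nhds (by simp)
  obtain ⟨W₀, hW₀, hmul⟩ := exists_nhds_one_split4 hN
  let W := interior (W₀ ∩ W₀⁻¹ ∩ V)
  have hW₁ : (1 : G) ∈ W := mem_interior_iff_mem_nhds.2
    (Filter.inter_mem (Filter.inter_mem hW₀ (inv_mem_nhds_one G hW₀)) hV)
  have hW : W ⊆ W₀ ∩ W₀⁻¹ ∩ V := interior_subset
  refine ⟨(N : Set G) * W, isOpen_interior.mul_left, fun n hn ↦ ⟨n, hn, 1, hW₁, mul_one n⟩,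
    fun H hNH hHU ↦ le_antisymm (fun h hh ↦ ?_) hNH⟩
  have hdiv {a b : G} (ha : a ∈ (H : Set G) ∩ W) (hb : b ∈ (H : Set G) ∩ W) :
      a * b⁻¹ ∈ (H : Set G) ∩ W := by
    have habH := H.mul_mem ha.1 (H.inv_mem hb.1)
    obtain ⟨n, hn, w, hw, hnw⟩ := Set.mem_mul.1 (hHU habH)
    have hn₁ : n ∈ ((N : Set G) \ {1})ᶜ := by
      rw [show n = a * b⁻¹ * w⁻¹ * 1 by rw [← hnw]; group]
      exact hmul (hW ha.2).1.1 (hW hb.2).1.2 (hW hw).1.2 (hW hW₁).1.1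
    obtain rfl : n = 1 := by_contra fun h ↦ hn₁ ⟨hn, h⟩
    exact ⟨habH, by rwa [← hnw, one_mul]⟩
  have hHW : Subgroup.ofDiv ((H : Set G) ∩ W) ⟨1, H.one_mem, hW₁⟩
      (fun _ ha _ hb ↦ hdiv ha hb) = ⊥ := hnss _ fun x hx ↦ (hW hx.2).2
  obtain ⟨n, hn, w, hw, rfl⟩ := Set.mem_mul.1 (hHU hh)
  have hw₁ : w ∈ (⊥ : Subgroup G) :=
    hHW ▸ ⟨by simpa using H.mul_mem (H.inv_mem (hNH hn)) hh, hw⟩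
  rw [Subgroup.mem_bot.1 hw₁, mul_one]
  exact hn

attribute [local instance] Matrix.linftyOpNormedRing Matrix.linftyOpNormedAlgebra

theorem exists_mem_nhds_one_forall_subgroup_eq_bot (σ : Type*) [Fintype σ] [DecidableEq σ] :
    ∃ V ∈ 𝓝 (1 : Matrix.SpecialLinearGroup σ ℂ),
      ∀ H : Subgroup (Matrix.SpecialLinearGroup σ ℂ), (H : Set _) ⊆ V → H = ⊥ := by
  have hcont : Continuous fun g : Matrix.SpecialLinearGroup σ ℂ ↦ (g : Matrix σ σ ℂ) :=
    Matrix.SpecialLinearGroup.isClosedEmbedding_val.continuous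
  have hnear : ∀ᶠ g : Matrix.SpecialLinearGroup σ ℂ in 𝓝 1, ‖(g : Matrix σ σ ℂ) - 1‖ ≤ 1 / 2 :=
    ((hcont.tendsto 1).sub_const (1 : Matrix σ σ ℂ)).norm.eventually_le_const (by simp)
  refine ⟨_, hnear, fun H hH ↦ (Subgroup.eq_bot_iff_forall H).2 fun g hg ↦ Subtype.ext ?_⟩
  have hpow (n : ℕ) : ‖((g ^ n : Matrix.SpecialLinearGroup σ ℂ) : Matrix σ σ ℂ) - 1‖ ≤ 1 / 2 :=
    hH (H.pow_mem hg n)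
  exact eq_one_of_forall_norm_pow_sub_one_le hpow

end NoSmallSubgroups

section Stabilizer

open Matrix

variable {σ R : Type*} [Fintype σ] [DecidableEq σ] [Field R]

/-- The group of unimodular matrices preserving the hypersurface `P = 0` in the sense that they
multiply the polynomial function `P` by a nonzero constant. -/
def hypersurfaceStabilizer (P : MvPolynomial σ R) : Subgroup (Matrix.SpecialLinearGroup σ R) where
  carrier := {g | ∃ c ≠ 0, ∀ x, eval ((g : Matrix σ σ R) *ᵥ x) P = c * eval x P}
  one_mem' := ⟨1, one_ne_zero, by simp⟩
  mul_mem' := by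
    rintro g h ⟨c, hc, hg⟩ ⟨l, hl, hh⟩
    exact ⟨c * l, mul_ne_zero hc hl, fun x ↦ by
      rw [Matrix.SpecialLinearGroup.coe_mul, ← mulVec_mulVec, hg, hh, mul_assoc]⟩
  inv_mem' := by
    rintro g ⟨c, hc, hg⟩
    exact ⟨c⁻¹, inv_ne_zero hc, fun x ↦ by
      rw [eq_inv_mul_iff_mul_eq₀ hc, ← hg, mulVec_mulVec, ← Matrix.SpecialLinearGroup.coe_mul,
        mul_inv_cancel, Matrix.SpecialLinearGroup.coe_one, one_mulVec]⟩

theorem mem_hypersurfaceStabilizer {P : MvPolynomial σ R} {g : Matrix.SpecialLinearGroup σ R} :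
    g ∈ hypersurfaceStabilizer P ↔
      ∃ c ≠ 0, ∀ x, eval ((g : Matrix σ σ R) *ᵥ x) P = c * eval x P :=
  Iff.rfl

theorem mem_hypersurfaceStabilizer_iff_forall_mul_eq {P : MvPolynomial σ R}
    {g : Matrix.SpecialLinearGroup σ R} : g ∈ hypersurfaceStabilizer P ↔
      ∀ x y, eval ((g : Matrix σ σ R) *ᵥ x) P * eval y P =
        eval ((g : Matrix σ σ R) *ᵥ y) P * eval x P := by
  refine ⟨fun ⟨c, _, hc⟩ x y ↦ by rw [hc, hc]; ring, fun h ↦ ?_⟩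
  by_cases hP : ∀ x, eval x P = 0
  · exact ⟨1, one_ne_zero, by simp [hP]⟩
  · obtain ⟨y, hy⟩ := not_forall.1 hP
    refine ⟨eval ((g : Matrix σ σ R) *ᵥ y) P / eval y P, div_ne_zero (fun h0 ↦ hy ?_) hy,
      fun x ↦ ?_⟩
    · have hgy : (g : Matrix σ σ R) *ᵥ (g⁻¹.1 *ᵥ y) = y := by
        rw [mulVec_mulVec, ← Matrix.SpecialLinearGroup.coe_mul, mul_inv_cancel,
          Matrix.SpecialLinearGroup.coe_one, one_mulVec]
      have hyy := h (g⁻¹.1 *ᵥ y) y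
      rwa [hgy, h0, zero_mul, mul_self_eq_zero] at hyy
    · rw [div_mul_eq_mul_div, eq_div_iff hy, h]

end Stabilizer

section Semicontinuity

open Filter Topology Matrix

attribute [local instance] Matrix.linftyOpNormedRing Matrix.linftyOpNormedAlgebra

variable {ι σ : Type*} [Fintype ι] [Fintype σ]

theorem exists_eventually_forall_norm_eval_le (F : ι → MvPolynomial σ ℂ) (t₀ : ι → ℂ) :
    ∃ K, ∀ᶠ t in 𝓝 t₀, ∀ x : σ → ℂ, ‖x‖ ≤ 1 → ‖eval x (∑ i, t i • F i)‖ ≤ K := by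
  have hcont : Continuous fun z : (ι → ℂ) × (σ → ℂ) ↦ eval z.2 (∑ i, z.1 i • F i) := by
    simp only [map_sum, smul_eval]
    exact continuous_finsetSum _ fun i _ ↦ (by fun_prop : Continuous _).mul
      ((MvPolynomial.continuous_eval (F i)).comp continuous_snd)
  obtain ⟨K, hK⟩ := ((isCompact_closedBall t₀ 1).prod
    (isCompact_closedBall (0 : σ → ℂ) 1)).exists_bound_of_continuousOn hcont.continuousOn
  exact ⟨K, eventually_of_mem (Metric.closedBall_mem_nhds t₀ one_pos) fun t ht x hx ↦
    hK (t, x) ⟨ht, mem_closedBall_zero_iff.2 hx⟩⟩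

variable [DecidableEq σ]

theorem isClosed_setOf_mem_hypersurfaceStabilizer (F : ι → MvPolynomial σ ℂ) :
    IsClosed {x : (ι → ℂ) × Matrix.SpecialLinearGroup σ ℂ |
      x.2 ∈ hypersurfaceStabilizer (∑ i, x.1 i • F i)} := by
  have hcont (y : σ → ℂ) : Continuous fun x : (ι → ℂ) × Matrix.SpecialLinearGroup σ ℂ ↦
      eval ((x.2 : Matrix σ σ ℂ) *ᵥ y) (∑ i, x.1 i • F i) := by
    simp only [map_sum, smul_eval]
    refine continuous_finsetSum _ fun i _ ↦ (by fun_prop : Continuous _).mul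
      ((MvPolynomial.continuous_eval (F i)).comp ?_)
    exact (Matrix.SpecialLinearGroup.isClosedEmbedding_val.continuous.comp
      continuous_snd).matrix_mulVec continuous_const
  have hcont' (y : σ → ℂ) : Continuous fun x : (ι → ℂ) × Matrix.SpecialLinearGroup σ ℂ ↦
      eval y (∑ i, x.1 i • F i) := by
    simp only [map_sum, smul_eval]
    fun_prop
  simp only [mem_hypersurfaceStabilizer_iff_forall_mul_eq, Set.ofPred_forall]
  exact isClosed_iInter fun x ↦ isClosed_iInter fun y ↦
    isClosed_eq ((hcont x).mul (hcont' y)) ((hcont y).mul (hcont' x))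

theorem exists_pos_le_norm_of_det_eq_one (σ : Type*) [Fintype σ] [DecidableEq σ] [Nonempty σ] :
    ∃ δ > 0, ∀ g : Matrix σ σ ℂ, g.det = 1 → δ ≤ ‖g‖ := by
  have hdet : ∀ᶠ g : Matrix σ σ ℂ in 𝓝 0, g.det ≠ 1 :=
    (Continuous.matrix_det continuous_id).continuousAt.eventually_ne (by simp [det_zero])
  obtain ⟨δ, hδ, hball⟩ := Metric.eventually_nhds_iff.1 hdet
  exact ⟨δ, hδ, fun g hg ↦ by_contra fun h ↦ hball (by simpa using h) hg⟩

variable [Nonempty σ] {F : ι → MvPolynomial σ ℂ} {t₀ : ι → ℂ} {m d : ℕ}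

theorem exists_eventually_forall_norm_le (hmd : 2 * m < d) (hF : ∀ i, (F i).IsHomogeneous d)
    (hord : ∀ p ≠ 0, orderAt p (∑ i, t₀ i • F i) ≤ m) :
    ∃ r, ∀ᶠ t in 𝓝 t₀, ∀ g ∈ hypersurfaceStabilizer (∑ i, t i • F i),
      ‖(g : Matrix σ σ ℂ)‖ ≤ r := by
  obtain ⟨c, hc, hvan⟩ := exists_eventually_boundedVanishing hord
  obtain ⟨K, hK⟩ := exists_eventually_forall_norm_eval_le F t₀
  obtain ⟨δ, hδ, hdet⟩ := exists_pos_le_norm_of_det_eq_one σ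
  refine ⟨9 ^ d * (K / c) ^ 2 / δ, ?_⟩
  filter_upwards [hvan, hK] with t hvan hK g ⟨l, hl, hg⟩
  have hgg : (g : Matrix σ σ ℂ) * g⁻¹.1 = 1 := by
    rw [← Matrix.SpecialLinearGroup.coe_mul, mul_inv_cancel, Matrix.SpecialLinearGroup.coe_one]
  have hP : (∑ i, t i • F i).IsHomogeneous d :=
    (homogeneousSubmodule σ ℂ d).sum_smul_mem t fun i _ ↦ hF i
  rw [le_div_iff₀ hδ]
  exact (mul_le_mul_of_nonneg_left (hdet _ (g⁻¹).2) (norm_nonneg _)).trans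
    (BoundedVanishingAt.norm_mul_norm_inv_le hc hmd hP hvan hK hgg hl hg)

theorem eventually_hypersurfaceStabilizer_subset (hmd : 2 * m < d)
    (hF : ∀ i, (F i).IsHomogeneous d) (hord : ∀ p ≠ 0, orderAt p (∑ i, t₀ i • F i) ≤ m)
    {U : Set (Matrix.SpecialLinearGroup σ ℂ)} (hU : IsOpen U)
    (hsub : (hypersurfaceStabilizer (∑ i, t₀ i • F i) : Set _) ⊆ U) :
    ∀ᶠ t in 𝓝 t₀, (hypersurfaceStabilizer (∑ i, t i • F i) : Set _) ⊆ U := by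
  obtain ⟨r, hr⟩ := exists_eventually_forall_norm_le hmd hF hord
  have : ProperSpace (Matrix σ σ ℂ) := FiniteDimensional.proper ℂ _
  have hcompact : IsCompact {g : Matrix.SpecialLinearGroup σ ℂ |
      (g : Matrix σ σ ℂ) ∈ Metric.closedBall 0 r} :=
    Matrix.SpecialLinearGroup.isClosedEmbedding_val.isCompact_preimage (isCompact_closedBall 0 r)
  have havoid : ∀ᶠ t in 𝓝 t₀, ∀ g ∈ {g : Matrix.SpecialLinearGroup σ ℂ |
      (g : Matrix σ σ ℂ) ∈ Metric.closedBall 0 r} \ U,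
      g ∉ hypersurfaceStabilizer (∑ i, t i • F i) :=
    (hcompact.diff hU).eventually_forall_of_forall_eventually fun g hg ↦
      (isClosed_setOf_mem_hypersurfaceStabilizer F).isOpen_compl.mem_nhds fun h ↦ hg.2 (hsub h)
  filter_upwards [hr, havoid] with t hr havoid g hg
  by_contra hgU
  exact havoid g ⟨mem_closedBall_zero_iff.2 (hr g hg), hgU⟩ hg

theorem eventually_hypersurfaceStabilizer_eq (hmd : 2 * m < d)
    (hF : ∀ i, (F i).IsHomogeneous d) (hord : ∀ p ≠ 0, orderAt p (∑ i, t₀ i • F i) ≤ m)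
    [Finite (hypersurfaceStabilizer (∑ i, t₀ i • F i))]
    (hle : ∀ t : ι → ℂ, hypersurfaceStabilizer (∑ i, t₀ i • F i) ≤
      hypersurfaceStabilizer (∑ i, t i • F i)) :
    ∀ᶠ t in 𝓝 t₀, hypersurfaceStabilizer (∑ i, t i • F i) =
      hypersurfaceStabilizer (∑ i, t₀ i • F i) := by
  obtain ⟨V, hV, hnss⟩ := exists_mem_nhds_one_forall_subgroup_eq_bot σ
  obtain ⟨U, hU, hsub, heq⟩ :=
    exists_isOpen_forall_subgroup_eq hV hnss (hypersurfaceStabilizer (∑ i, t₀ i • F i))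
  exact (eventually_hypersurfaceStabilizer_subset hmd hF hord hU hsub).mono fun t ht ↦
    heq _ (hle t) ht

end Semicontinuity

section LinearForms

variable {σ R : Type*} [Fintype σ] [CommSemiring R]

/-- The linear form with coefficient vector `a`. -/
def linForm (a : σ → R) : MvPolynomial σ R :=
  ∑ j, C (a j) * X j

theorem eval_linForm (a x : σ → R) : eval x (linForm a) = a ⬝ᵥ x := by
  simp [linForm, dotProduct]

theorem isHomogeneous_linForm (a : σ → R) : (linForm a).IsHomogeneous 1 :=
  IsHomogeneous.sum _ _ _ fun j _ ↦ (isHomogeneous_X R j).C_mul _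

theorem pderiv_linForm (a : σ → R) (v : σ) : pderiv v (linForm a) = C (a v) := by
  classical
  simp [linForm, pderiv_X, Pi.single_apply]

theorem eval_pderiv_pderiv_linForm_pow (a x : σ → R) (j k : σ) (n : ℕ) :
    eval x (pderiv j (pderiv k (linForm a ^ n))) =
      n * (n - 1 : ℕ) * (a j * a k * (a ⬝ᵥ x) ^ (n - 2)) := by
  simp [Derivation.leibniz_pow, pderiv_linForm, eval_linForm, Nat.sub_sub]
  ring

end LinearForms

section Eisenstein

theorem irreducible_of_prime_dvd_coeff {A : Type*} [CommRing A] [IsDomain A] {s : A} (hs : Prime s)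
    {f : Polynomial A} (hlead : IsUnit f.leadingCoeff) (hdeg : 0 < f.natDegree)
    (hdvd : ∀ k < f.natDegree, s ∣ f.coeff k) (hsq : ¬ s ^ 2 ∣ f.coeff 0) : Irreducible f := by
  have hprime : (Ideal.span {s}).IsPrime := (Ideal.span_singleton_prime hs.ne_zero).2 hs
  have hprim : f.IsPrimitive := Polynomial.isPrimitive_iff_isUnit_of_C_dvd.2 fun r hr ↦
    isUnit_of_dvd_unit ((Polynomial.C_dvd_iff_dvd_coeff r f).1 hr _) hlead
  refine Polynomial.irreducible_of_eisenstein_criterion hprime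
    (fun h ↦ hprime.ne_top (Ideal.eq_top_of_isUnit_mem _ h hlead))
    (fun k hk ↦ Ideal.mem_span_singleton.2 (hdvd k (Polynomial.coe_lt_degree.1 hk)))
    (Polynomial.natDegree_pos_iff_degree_pos.1 hdeg) ?_ hprim
  rwa [Ideal.span_singleton_pow, Ideal.mem_span_singleton]

theorem irreducible_C_mul_X_pow_add_X_add_C_pow {A : Type*} [CommRing A] [IsDomain A] {s a b : A}
    (hs : Prime s) (ha : IsUnit (a + 1)) (hb : ¬ s ∣ b) {n : ℕ} (hn : 2 ≤ n) :
    Irreducible (Polynomial.C a * Polynomial.X ^ n + (Polynomial.X + Polynomial.C s) ^ n +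
      Polynomial.C (s * b)) := by
  set f := Polynomial.C a * Polynomial.X ^ n + (Polynomial.X + Polynomial.C s) ^ n +
    Polynomial.C (s * b) with hf
  have hcoeff (k : ℕ) : f.coeff k =
      (if k = n then a else 0) + s ^ (n - k) * n.choose k + if k = 0 then s * b else 0 := by
    simp [hf, Polynomial.coeff_C, Polynomial.coeff_X_add_C_pow, Polynomial.coeff_X_pow]
  have hn0 : n ≠ 0 := by lia
  have hlead : f.coeff n = a + 1 := by simp [hcoeff, hn0]
  have hdeg : f.natDegree = n := Polynomial.natDegree_eq_of_le_of_coeff_ne_zero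
    (Polynomial.natDegree_le_iff_coeff_eq_zero.2 fun k hk ↦ by
      simp [hcoeff, hk.ne', Nat.ne_zero_of_lt hk, Nat.choose_eq_zero_of_lt hk])
    (hlead ▸ ha.ne_zero)
  refine irreducible_of_prime_dvd_coeff hs ?_ (hdeg ▸ hn0.bot_lt) (fun k hk ↦ ?_) ?_
  · rwa [Polynomial.leadingCoeff, hdeg, hlead]
  · rw [hdeg] at hk
    rw [hcoeff, if_neg hk.ne, zero_add]
    refine dvd_add ((dvd_pow_self s (Nat.sub_ne_zero_of_lt hk)).mul_right _) ?_
    split_ifs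
    exacts [dvd_mul_right s b, dvd_zero s]
  · rw [hcoeff, if_neg hn0.symm, if_pos rfl, zero_add, Nat.choose_zero_right, Nat.cast_one, mul_one,
      Nat.sub_zero, dvd_add_right (pow_dvd_pow s hn), pow_two]
    exact fun h ↦ hb ((mul_dvd_mul_iff_left hs.ne_zero).1 h)

end Eisenstein

section RigidQuartic

open Matrix

/-- The coordinate forms on `ℂ³` together with the negative of their sum. -/
def frame : Fin 4 → Fin 3 → ℂ :=
  ![![1, 0, 0], ![0, 1, 0], ![0, 0, 1], ![-1, -1, -1]]

/-- The coefficients of the powers of the forms `frame i` in `rigidQuartic`. They are distinct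
with nonzero sum, which excludes automorphisms permuting the four forms; the second and the third
are opposite to allow for an application of Eisenstein's criterion. -/
def weight : Fin 4 → ℂ :=
  ![27, 64, -64, 1]

/-- The quartic `27 x⁴ + 64 y⁴ - 64 z⁴ + (x + y + z)⁴`, whose only projective automorphism is the
identity. -/
def rigidQuartic : MvPolynomial (Fin 3) ℂ :=
  ∑ i, C (weight i) * linForm (frame i) ^ 4

theorem isHomogeneous_rigidQuartic : rigidQuartic.IsHomogeneous 4 :=
  IsHomogeneous.sum _ _ _ fun i _ ↦ ((isHomogeneous_linForm (frame i)).pow 4).C_mul _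

theorem smoothCurve_rigidQuartic : SmoothCurve rigidQuartic := by
  intro q hq
  have hnorm {a u v : ℂ} (h : a ^ 3 * u ^ 3 = v ^ 3) : ‖a‖ * ‖u‖ = ‖v‖ := by
    rw [← norm_mul]
    exact (pow_left_inj₀ (norm_nonneg _) (norm_nonneg _) three_ne_zero).1
      (by rw [← norm_pow, mul_pow, h, norm_pow])
  have hder (v : Fin 3) : ∑ i, weight i * (4 * ((frame i ⬝ᵥ q) ^ 3 * frame i v)) = 0 := by
    simpa [rigidQuartic, pderiv_linForm, eval_linForm] using hq v
  have h0 : 27 * (4 * q 0 ^ 3) + -(4 * (-q 0 + (-q 1 + -q 2)) ^ 3) = 0 := by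
    simpa [Fin.sum_univ_succ, frame, weight, dotProduct] using hder 0
  have h1 : 64 * (4 * q 1 ^ 3) + -(4 * (-q 0 + (-q 1 + -q 2)) ^ 3) = 0 := by
    simpa [Fin.sum_univ_succ, frame, weight, dotProduct] using hder 1
  have h2 : -(64 * (4 * q 2 ^ 3)) + -(4 * (-q 0 + (-q 1 + -q 2)) ^ 3) = 0 := by
    simpa [Fin.sum_univ_succ, frame, weight, dotProduct] using hder 2
  set s := q 0 + q 1 + q 2
  have hx : ‖(3 : ℂ)‖ * ‖q 0‖ = ‖-s‖ := hnorm (by linear_combination h0 / 4)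
  have hy : ‖(4 : ℂ)‖ * ‖q 1‖ = ‖-s‖ := hnorm (by linear_combination h1 / 4)
  have hz : ‖(4 : ℂ)‖ * ‖q 2‖ = ‖s‖ := hnorm (by linear_combination -h2 / 4)
  rw [norm_neg, Complex.norm_ofNat] at hx hy
  rw [Complex.norm_ofNat] at hz
  have hs₀ : ‖s‖ ≤ 0 := by linarith [norm_add₃_le (a := q 0) (b := q 1) (c := q 2)]
  ext v
  refine norm_le_zero_iff.1 ?_
  fin_cases v
  exacts [(by linarith : ‖q 0‖ ≤ 0), (by linarith : ‖q 1‖ ≤ 0), (by linarith : ‖q 2‖ ≤ 0)]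

theorem finSuccEquiv_rigidQuartic :
    finSuccEquiv ℂ 2 rigidQuartic = Polynomial.C (C 27) * Polynomial.X ^ 4 +
      (Polynomial.X + Polynomial.C (X 0 + X 1)) ^ 4 +
      Polynomial.C ((X 0 + X 1) * (C 64 * ((X 0 - X 1) * (X 0 ^ 2 + X 1 ^ 2)))) := by
  have hX1 : finSuccEquiv ℂ 2 (X 1) = Polynomial.C (X 0) := finSuccEquiv_X_succ (j := 0)
  have hX2 : finSuccEquiv ℂ 2 (X 2) = Polynomial.C (X 1) := finSuccEquiv_X_succ (j := 1)
  have hC (a : ℂ) : finSuccEquiv ℂ 2 (C a) = Polynomial.C (C a) := by simp [finSuccEquiv_apply]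
  have hF : rigidQuartic =
      C 27 * X 0 ^ 4 + (X 0 + (X 1 + X 2)) ^ 4 + C 64 * (X 1 ^ 4 - X 2 ^ 4) := by
    simp [rigidQuartic, linForm, Fin.sum_univ_succ, frame, weight]
    ring
  simp only [hF, map_add, map_sub, map_mul, map_pow, hX1, hX2, hC, finSuccEquiv_X_zero]
  ring

theorem irreducible_rigidQuartic : Irreducible rigidQuartic := by
  have hs : Prime (X 0 + X 1 : MvPolynomial (Fin 2) ℂ) := by
    refine Irreducible.prime ?_
    simpa using irreducible_mul_X_add (R := ℂ) 1 (X 1) (0 : Fin 2) one_ne_zero (by simp)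
      (by simp [vars_X]) isRelPrime_one_left
  rw [← MulEquiv.irreducible_iff (finSuccEquiv ℂ 2), finSuccEquiv_rigidQuartic]
  have hunit : IsUnit (C 27 + 1 : MvPolynomial (Fin 2) ℂ) := by
    rw [← C_1, ← C_add]
    exact (IsUnit.mk0 _ (by norm_num)).map C
  refine irreducible_C_mul_X_pow_add_X_add_C_pow hs hunit (fun ⟨r, hr⟩ ↦ ?_) (by norm_num)
  simpa using congrArg (eval ![1, -1]) hr

theorem eq_zero_of_forall_sum_mul_frame_dotProduct_pow_eq_zero {n : ℕ} (hn : Even n) (hn0 : n ≠ 0)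
    {e : Fin 4 → ℂ} (he : ∀ x, ∑ i, e i * (frame i ⬝ᵥ x) ^ n = 0) (i : Fin 4) : e i = 0 := by
  have h01 : e 0 + e 1 = 0 := by
    simpa [Fin.sum_univ_succ, frame, hn.neg_one_pow, hn0] using he ![1, -1, 0]
  have h02 : e 0 + e 2 = 0 := by
    simpa [Fin.sum_univ_succ, frame, hn.neg_one_pow, hn0] using he ![1, 0, -1]
  have h12 : e 1 + e 2 = 0 := by
    simpa [Fin.sum_univ_succ, frame, hn.neg_one_pow, hn0] using he ![0, 1, -1]
  have h03 : e 0 + e 3 = 0 := by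
    simpa [Fin.sum_univ_succ, frame, hn.neg_one_pow, hn0] using he ![1, 0, 0]
  have h0 : e 0 = 0 := by linear_combination (h01 + h02 - h12) / 2
  have h1 : e 1 = 0 := by linear_combination h01 - h0
  have h2 : e 2 = 0 := by linear_combination h02 - h0
  have h3 : e 3 = 0 := by linear_combination h03 - h0
  fin_cases i
  exacts [h0, h1, h2, h3]

theorem exists_eq_smul_frame {v : Fin 3 → ℂ} (h01 : v 0 * v 1 = v 0 * v 2)
    (h12 : v 0 * v 1 = v 1 * v 2) : ∃ j, ∃ a : ℂ, v = a • frame j := by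
  by_cases h0 : v 0 = 0
  · have h : v 1 = 0 ∨ v 2 = 0 := mul_eq_zero.1 (by rw [← h12, h0, zero_mul])
    rcases h with h1 | h2
    · exact ⟨2, v 2, by ext i; fin_cases i <;> simp [frame, h0, h1]⟩
    · exact ⟨1, v 1, by ext i; fin_cases i <;> simp [frame, h0, h2]⟩
  · have h2 : v 2 = v 1 := (mul_left_cancel₀ h0 h01).symm
    rw [h2] at h12
    by_cases h1 : v 1 = 0
    · exact ⟨0, v 0, by ext i; fin_cases i <;> simp [frame, h1, h2]⟩
    · exact ⟨3, -v 0, by ext i; fin_cases i <;> simp [frame, h2, mul_right_cancel₀ h1 h12]⟩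

theorem weight_ne_zero (i : Fin 4) : weight i ≠ 0 := by
  fin_cases i <;> simp [weight]

theorem weight_injective : Function.Injective weight := by
  intro i j h
  fin_cases i <;> fin_cases j <;> first | rfl | (norm_num [weight] at h)

theorem frame_mul_frame {j k : Fin 3} (hjk : j ≠ k) (i : Fin 4) :
    frame i j * frame i k = if i = 3 then 1 else 0 := by
  fin_cases i <;> fin_cases j <;> fin_cases k <;> simp_all [frame]

theorem eval_mulVec_rigidQuartic (g : Matrix (Fin 3) (Fin 3) ℂ) (x : Fin 3 → ℂ) :
    eval (g *ᵥ x) rigidQuartic = ∑ i, weight i * ((frame i ᵥ* g) ⬝ᵥ x) ^ 4 := by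
  simp [rigidQuartic, eval_linForm, dotProduct_mulVec]

theorem sum_weight_mul_frame_vecMul {g : Matrix (Fin 3) (Fin 3) ℂ} {l : ℂ}
    (hg : ∀ x, eval (g *ᵥ x) rigidQuartic = l * eval x rigidQuartic) {j k : Fin 3} (hjk : j ≠ k)
    (x : Fin 3 → ℂ) :
    ∑ i, weight i * ((frame i ᵥ* g) j * (frame i ᵥ* g) k * ((frame i ᵥ* g) ⬝ᵥ x) ^ 2) =
      l * (frame 3 ⬝ᵥ x) ^ 2 := by
  have hpoly : ∑ i, C (weight i) * linForm (frame i ᵥ* g) ^ 4 = C l * rigidQuartic := by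
    refine MvPolynomial.funext fun x ↦ ?_
    rw [map_mul, eval_C, ← hg, eval_mulVec_rigidQuartic]
    simp [eval_linForm]
  have hder := congrArg (fun P ↦ eval x (pderiv j (pderiv k P))) hpoly
  simp only [rigidQuartic, map_sum, pderiv_C_mul, map_mul, eval_C, eval_pderiv_pderiv_linForm_pow,
    frame_mul_frame hjk] at hder
  refine mul_left_cancel₀ (by norm_num : (12 : ℂ) ≠ 0) (Eq.trans ?_ (hder.trans ?_))
  · rw [Finset.mul_sum]
    exact Finset.sum_congr rfl fun i _ ↦ by norm_num; ring
  · norm_num [show weight 3 = 1 from rfl]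
    ring

theorem exists_frame_vecMul_eq_smul {g h : Matrix (Fin 3) (Fin 3) ℂ} (hgh : g * h = 1) {l : ℂ}
    (hg : ∀ x, eval (g *ᵥ x) rigidQuartic = l * eval x rigidQuartic) (i : Fin 4) :
    ∃ j, ∃ a : ℂ, frame i ᵥ* g = a • frame j := by
  let v (i : Fin 4) : Fin 3 → ℂ := frame i ᵥ* g
  have hv (i : Fin 4) (u : Fin 3 → ℂ) : v i ⬝ᵥ (h *ᵥ u) = frame i ⬝ᵥ u := by
    rw [dotProduct_mulVec, vecMul_vecMul, hgh, vecMul_one]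
  have hprod {j k k' : Fin 3} (hjk : j ≠ k) (hjk' : j ≠ k') : v i j * v i k = v i j * v i k' := by
    have hzero := eq_zero_of_forall_sum_mul_frame_dotProduct_pow_eq_zero even_two two_ne_zero
      (e := fun i ↦ weight i * (v i j * v i k - v i j * v i k')) (fun u ↦ ?_) i
    · exact sub_eq_zero.1 ((mul_eq_zero_iff_left (weight_ne_zero i)).1 hzero)
    · have := (sum_weight_mul_frame_vecMul hg hjk (h *ᵥ u)).trans
        (sum_weight_mul_frame_vecMul hg hjk' (h *ᵥ u)).symm
      rw [← sub_eq_zero, ← Finset.sum_sub_distrib] at this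
      refine Eq.trans (Finset.sum_congr rfl fun i _ ↦ ?_) this
      rw [← hv]
      ring
  exact exists_eq_smul_frame (hprod (by decide) (by decide))
    ((mul_comm _ _).trans (hprod (by decide) (by decide)))

theorem exists_perm_frame_vecMul_eq_smul {g h : Matrix (Fin 3) (Fin 3) ℂ} (hgh : g * h = 1)
    {l : ℂ} (hl : l ≠ 0) (hg : ∀ x, eval (g *ᵥ x) rigidQuartic = l * eval x rigidQuartic) :
    ∃ (π : Equiv.Perm (Fin 4)) (a : Fin 4 → ℂ), (∀ i, frame i ᵥ* g = a i • frame (π i)) ∧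
      ∀ i, weight i * a i ^ 4 = l * weight (π i) := by
  choose π a ha using exists_frame_vecMul_eq_smul hgh hg
  have hfiber (j : Fin 4) : ∑ i with π i = j, weight i * a i ^ 4 = l * weight j := by
    refine sub_eq_zero.1 (eq_zero_of_forall_sum_mul_frame_dotProduct_pow_eq_zero
      (n := 4) (by decide) four_ne_zero (e := fun j ↦ ∑ i with π i = j, weight i * a i ^ 4 -
        l * weight j) (fun x ↦ ?_) j)
    have hx := hg x
    rw [eval_mulVec_rigidQuartic, ← Finset.sum_fiberwise _ π] at hx
    simp_rw [sub_mul, Finset.sum_sub_distrib, sub_eq_zero, Finset.sum_mul]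
    refine Eq.trans (Finset.sum_congr rfl fun j _ ↦ Finset.sum_congr rfl fun i hi ↦ ?_)
      (hx.trans ?_)
    · rw [ha, (Finset.mem_filter.1 hi).2, smul_dotProduct, smul_eq_mul, mul_pow, mul_assoc]
    · simp [rigidQuartic, eval_linForm, Finset.mul_sum, mul_assoc]
  have hsurj : Function.Surjective π := fun j ↦ by
    by_contra! hj
    exact mul_ne_zero hl (weight_ne_zero j) (by simp [← hfiber, hj])
  have hinj : Function.Injective π := Finite.injective_iff_surjective.2 hsurj
  have hbij : Function.Bijective π := ⟨hinj, hsurj⟩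
  refine ⟨.ofBijective π hbij, a, ha, fun i ↦ ?_⟩
  rw [Equiv.ofBijective_apply, ← hfiber,
    Finset.sum_eq_single_of_mem i (by simp) (by simp +contextual [hinj.eq_iff])]

theorem sum_frame : ∑ i, frame i = 0 := by
  ext j
  fin_cases j <;> simp [Fin.sum_univ_succ, frame]

theorem eq_of_sum_smul_frame_eq_zero {b : Fin 4 → ℂ} (hb : ∑ i, b i • frame i = 0) (i : Fin 4) :
    b i = b 3 := by
  have h0 : b 0 = b 3 := by
    simpa [Fin.sum_univ_succ, frame, add_neg_eq_zero] using congrFun hb 0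
  have h1 : b 1 = b 3 := by
    simpa [Fin.sum_univ_succ, frame, add_neg_eq_zero] using congrFun hb 1
  have h2 : b 2 = b 3 := by
    simpa [Fin.sum_univ_succ, frame, add_neg_eq_zero] using congrFun hb 2
  fin_cases i
  exacts [h0, h1, h2, rfl]

theorem eq_smul_one_of_forall_frame_vecMul {g : Matrix (Fin 3) (Fin 3) ℂ} {a : ℂ}
    (hg : ∀ i, frame i ᵥ* g = a • frame i) : g = a • 1 := by
  have hrow (i : Fin 3) : frame i.castSucc = Pi.single i 1 := by
    ext j
    fin_cases i <;> fin_cases j <;> simp [frame]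
  ext i j
  have := congrFun (hg i.castSucc) j
  rw [hrow, single_one_vecMul] at this
  simpa [one_apply, Pi.single_apply, eq_comm] using this

theorem eq_smul_one_of_forall_eval_mulVec_rigidQuartic {g h : Matrix (Fin 3) (Fin 3) ℂ}
    (hgh : g * h = 1) {l : ℂ} (hl : l ≠ 0)
    (hg : ∀ x, eval (g *ᵥ x) rigidQuartic = l * eval x rigidQuartic) : ∃ a : ℂ, g = a • 1 := by
  obtain ⟨π, a, ha, hweight⟩ := exists_perm_frame_vecMul_eq_smul hgh hl hg
  have hsum : ∑ i, a (π.symm i) • frame i = 0 := by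
    rw [← Equiv.sum_comp π]
    simp_rw [Equiv.symm_apply_apply, ← ha]
    rw [← sum_vecMul, sum_frame, zero_vecMul]
  obtain ⟨b, hb⟩ : ∃ b, ∀ i, a i = b :=
    ⟨_, fun i ↦ by simpa using eq_of_sum_smul_frame_eq_zero hsum (π i)⟩
  simp_rw [hb] at ha hweight
  have hscale : b ^ 4 = l := by
    have hw : ∑ i, weight i ≠ 0 := by norm_num [Fin.sum_univ_succ, weight]
    refine mul_left_cancel₀ hw ?_
    rw [Finset.sum_mul, Finset.sum_congr rfl fun i _ ↦ hweight i, ← Finset.mul_sum,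
      Equiv.sum_comp π weight, mul_comm]
  have hπ (i : Fin 4) : π i = i := by
    refine weight_injective (mul_left_cancel₀ hl ?_)
    rw [← hweight, hscale, mul_comm]
  simp_rw [hπ] at ha
  exact ⟨b, eq_smul_one_of_forall_frame_vecMul ha⟩

theorem hypersurfaceStabilizer_rigidQuartic_le_center :
    hypersurfaceStabilizer rigidQuartic ≤ Subgroup.center SL(3, ℂ) := by
  rintro g ⟨l, hl, hg⟩
  have hgh : (g : Matrix (Fin 3) (Fin 3) ℂ) * (g⁻¹ : SL(3, ℂ)) = 1 := by
    rw [← Matrix.SpecialLinearGroup.coe_mul, mul_inv_cancel, Matrix.SpecialLinearGroup.coe_one]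
  obtain ⟨a, ha⟩ := eq_smul_one_of_forall_eval_mulVec_rigidQuartic hgh hl hg
  refine Subgroup.mem_center_iff.2 fun k ↦ Subtype.ext ?_
  simp [ha]

end RigidQuartic

section Substitution

open Matrix

variable {M N : Matrix (Fin 3) (Fin 3) ℂ} {P : MvPolynomial (Fin 3) ℂ}

theorem substMat_X (M : Matrix (Fin 3) (Fin 3) ℂ) (i : Fin 3) : substMat M (X i) = linForm (M i) :=
  aeval_X _ _

theorem eval_substMat (M : Matrix (Fin 3) (Fin 3) ℂ) (P : MvPolynomial (Fin 3) ℂ)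
    (x : Fin 3 → ℂ) : eval x (substMat M P) = eval (M *ᵥ x) P := by
  have h : (aeval x).comp (substMat M) = aeval (R := ℂ) (M *ᵥ x) := algHom_ext fun i ↦ by
    simp [substMat_X, aeval_eq_eval, eval_linForm, mulVec]
  simpa [aeval_eq_eval] using DFunLike.congr_fun h P

theorem substMat_substMat (M N : Matrix (Fin 3) (Fin 3) ℂ) (P : MvPolynomial (Fin 3) ℂ) :
    substMat N (substMat M P) = substMat (M * N) P :=
  MvPolynomial.funext fun x ↦ by simp only [eval_substMat, mulVec_mulVec]

theorem substMat_one (P : MvPolynomial (Fin 3) ℂ) : substMat 1 P = P :=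
  MvPolynomial.funext fun x ↦ by rw [eval_substMat, one_mulVec]

theorem isHomogeneous_substMat {d : ℕ} (hP : P.IsHomogeneous d)
    (M : Matrix (Fin 3) (Fin 3) ℂ) : (substMat M P).IsHomogeneous d := by
  rw [← one_mul d]
  exact hP.aeval _ fun i ↦ isHomogeneous_linForm (M i)

theorem substMat_smul {d : ℕ} (hP : P.IsHomogeneous d) (l : ℂ) (M : Matrix (Fin 3) (Fin 3) ℂ) :
    substMat (l • M) P = l ^ d • substMat M P :=
  MvPolynomial.funext fun x ↦ by
    rw [smul_eval, eval_substMat, eval_substMat, smul_mulVec, eval_smul_of_isHomogeneous hP]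

theorem eval_pderiv_substMat (M : Matrix (Fin 3) (Fin 3) ℂ) (P : MvPolynomial (Fin 3) ℂ)
    (x : Fin 3 → ℂ) (v : Fin 3) : eval x (pderiv v (substMat M P)) =
      ((fun w ↦ eval (M *ᵥ x) (pderiv w P)) ᵥ* M) v := by
  simp [derivation_apply_algHom, substMat_X, pderiv_linForm, eval_substMat, vecMul, dotProduct]

theorem smoothCurve_substMat (hP : SmoothCurve P) (hM : IsUnit M) : SmoothCurve (substMat M P) := by
  intro q hq
  have hgrad : (fun w ↦ eval (M *ᵥ q) (pderiv w P)) = 0 := by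
    refine vecMul_injective_of_isUnit hM (funext fun v ↦ ?_)
    exact (eval_pderiv_substMat M P q v).symm.trans ((hq v).trans (by simp))
  exact mulVec_injective_of_isUnit hM ((hP _ (congrFun hgrad)).trans (mulVec_zero M).symm)

theorem irreducible_substMat (hP : Irreducible P) (hM : IsUnit M) :
    Irreducible (substMat M P) := by
  obtain ⟨u, rfl⟩ := hM
  let e : MvPolynomial (Fin 3) ℂ ≃ₐ[ℂ] MvPolynomial (Fin 3) ℂ :=
    .ofAlgHom (substMat u) (substMat ↑u⁻¹)
      (AlgHom.ext fun Q ↦ by simp [substMat_substMat, substMat_one])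
      (AlgHom.ext fun Q ↦ by simp [substMat_substMat, substMat_one])
  exact (MulEquiv.irreducible_iff e).2 hP

theorem mem_hypersurfaceStabilizer_iff_substMat {g : SL(3, ℂ)} :
    g ∈ hypersurfaceStabilizer P ↔ ∃ c : ℂ, c ≠ 0 ∧ substMat g P = c • P := by
  simp_rw [mem_hypersurfaceStabilizer, MvPolynomial.funext_iff, eval_substMat, smul_eval]

end Substitution

section ProjectiveLinearGroup

theorem exists_eq_smul_of_mk_eq_mk {g h : GL (Fin 3) ℂ}
    (hgh : (QuotientGroup.mk g : PGL3) = QuotientGroup.mk h) :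
    ∃ l : ℂ, l ≠ 0 ∧ (h : Matrix (Fin 3) (Fin 3) ℂ) = l • (g : Matrix (Fin 3) (Fin 3) ℂ) := by
  obtain ⟨l, hl⟩ := Matrix.GeneralLinearGroup.mem_center_iff_val_mem_range_scalar.1
    (QuotientGroup.eq.1 hgh)
  have hh : (h : Matrix (Fin 3) (Fin 3) ℂ) = l • (g : Matrix (Fin 3) (Fin 3) ℂ) := by
    rw [← mul_inv_cancel_left g h, Units.val_mul, ← hl, Matrix.scalar_apply,
      ← Matrix.smul_one_eq_diagonal, mul_smul_comm, mul_one]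
  refine ⟨l, ?_, hh⟩
  rintro rfl
  exact h.ne_zero (by rw [hh, zero_smul])

theorem mk_eq_mk_of_eq_smul {g h : GL (Fin 3) ℂ} {l : ℂ}
    (hgh : (h : Matrix (Fin 3) (Fin 3) ℂ) = l • (g : Matrix (Fin 3) (Fin 3) ℂ)) :
    (QuotientGroup.mk g : PGL3) = QuotientGroup.mk h := by
  refine QuotientGroup.eq.2
    (Matrix.GeneralLinearGroup.mem_center_iff_val_mem_range_scalar.2 ⟨l, ?_⟩)
  rw [Units.val_mul, hgh, mul_smul_comm, ← Units.val_mul, inv_mul_cancel, Matrix.scalar_apply,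
    ← Matrix.smul_one_eq_diagonal, Units.val_one]

/-- The projection of unimodular matrices onto `PGL₃(ℂ)`. -/
def toPGL3 : SL(3, ℂ) →* PGL3 :=
  (QuotientGroup.mk' _).comp Matrix.SpecialLinearGroup.toGL

theorem toPGL3_surjective : Function.Surjective toPGL3 := by
  intro γ
  obtain ⟨g, rfl⟩ := QuotientGroup.mk_surjective γ
  obtain ⟨l, hl⟩ := IsAlgClosed.exists_pow_nat_eq (g : Matrix (Fin 3) (Fin 3) ℂ).det⁻¹ three_pos
  refine ⟨⟨l • (g : Matrix (Fin 3) (Fin 3) ℂ), ?_⟩, (mk_eq_mk_of_eq_smul (l := l) rfl).symm⟩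
  rw [Matrix.det_smul, Fintype.card_fin, hl, inv_mul_cancel₀ g.det_ne_zero]

theorem exists_eq_smul_of_toPGL3_eq {g h : SL(3, ℂ)} (hgh : toPGL3 g = toPGL3 h) :
    ∃ l : ℂ, l ≠ 0 ∧ (h : Matrix (Fin 3) (Fin 3) ℂ) = l • (g : Matrix (Fin 3) (Fin 3) ℂ) :=
  exists_eq_smul_of_mk_eq_mk hgh

theorem ker_toPGL3 : toPGL3.ker = Subgroup.center SL(3, ℂ) := by
  refine le_antisymm (fun g hg ↦ ?_) (fun g hg ↦ ?_)
  · obtain ⟨l, -, hl⟩ := exists_eq_smul_of_toPGL3_eq ((map_one toPGL3).trans hg.symm)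
    rw [Matrix.SpecialLinearGroup.coe_one] at hl
    exact Subgroup.mem_center_iff.2 fun k ↦ Subtype.ext (by simp [hl])
  · obtain ⟨l, -, hl⟩ := Matrix.SpecialLinearGroup.mem_center_iff.1 hg
    refine MonoidHom.mem_ker.2 (mk_eq_mk_of_eq_smul (g := 1) (l := l) ?_).symm
    rw [Matrix.SpecialLinearGroup.coe_GL_coe_matrix, ← hl, Units.val_one, Matrix.scalar_apply,
      Matrix.smul_one_eq_diagonal]

theorem finite_comap_toPGL3 (Γ : Subgroup PGL3) [Finite Γ] : Finite (Γ.comap toPGL3) := by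
  have : NeZero (max (Fintype.card (Fin 3)) 1) := ⟨by simp⟩
  have hker : Finite toPGL3.ker :=
    ker_toPGL3 ▸ Finite.of_equiv _ Matrix.SpecialLinearGroup.center_equiv_rootsOfUnity.symm.toEquiv
  refine (Set.toFinite (Γ : Set PGL3)).preimage' fun γ _ ↦ ?_
  obtain ⟨g, rfl⟩ := toPGL3_surjective γ
  refine ((Set.toFinite (toPGL3.ker : Set SL(3, ℂ))).image (g * ·)).subset fun h hh ↦ ?_
  exact ⟨g⁻¹ * h, (MonoidHom.eq_iff _).1 (Set.mem_singleton_iff.1 hh), mul_inv_cancel_left g h⟩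

theorem projStab_toPGL3_iff {d : ℕ} {P : MvPolynomial (Fin 3) ℂ} (hP : P.IsHomogeneous d)
    {g : SL(3, ℂ)} : ProjStab P (toPGL3 g) ↔ g ∈ hypersurfaceStabilizer P := by
  rw [mem_hypersurfaceStabilizer_iff_substMat]
  refine ⟨fun ⟨h, hh, c, hc, hP'⟩ ↦ ?_, fun ⟨c, hc, hP'⟩ ↦ ⟨_, rfl, c, hc, hP'⟩⟩
  obtain ⟨l, hl, hg⟩ := exists_eq_smul_of_mk_eq_mk hh
  refine ⟨l ^ d * c, mul_ne_zero (pow_ne_zero d hl) hc, ?_⟩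
  rw [mul_smul, ← hP', ← substMat_smul hP, ← hg, Matrix.SpecialLinearGroup.coe_GL_coe_matrix]

end ProjectiveLinearGroup

section NormForm

open Matrix

/-- A unimodular matrix representing the projective transformation `γ`. -/
def unimodularLift (γ : PGL3) : SL(3, ℂ) :=
  Function.surjInv toPGL3_surjective γ

theorem toPGL3_unimodularLift (γ : PGL3) : toPGL3 (unimodularLift γ) = γ :=
  Function.surjInv_eq toPGL3_surjective γ

theorem isUnit_coe_unimodularLift (γ : PGL3) :
    IsUnit (unimodularLift γ : Matrix (Fin 3) (Fin 3) ℂ) :=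
  (Matrix.SpecialLinearGroup.toGL (unimodularLift γ)).isUnit

variable (Γ : Subgroup PGL3) [Fintype Γ] {Q : MvPolynomial (Fin 3) ℂ} {d : ℕ}

/-- The norm of `Q` under `Γ`, that is, the product of the translates of `Q` by lifts of the
elements of `Γ`. Another choice of lifts multiplies the norms of all forms of the same degree by
the same constant. -/
def normForm (Q : MvPolynomial (Fin 3) ℂ) : MvPolynomial (Fin 3) ℂ :=
  ∏ γ : Γ, substMat (unimodularLift γ) Q

theorem isHomogeneous_normForm (hQ : Q.IsHomogeneous d) :
    (normForm Γ Q).IsHomogeneous (d * Fintype.card Γ) := by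
  simpa [normForm, mul_comm] using IsHomogeneous.prod Finset.univ
    (fun γ : Γ ↦ substMat (unimodularLift γ) Q) _ fun γ _ ↦ isHomogeneous_substMat hQ _

theorem eval_normForm (x : Fin 3 → ℂ) : eval x (normForm Γ Q) =
    ∏ γ : Γ, eval ((unimodularLift γ : Matrix (Fin 3) (Fin 3) ℂ) *ᵥ x) Q := by
  simp [normForm, eval_substMat]

theorem exists_forall_substMat_normForm (d : ℕ) {h : SL(3, ℂ)} (hh : toPGL3 h ∈ Γ) :
    ∃ χ : ℂ, χ ≠ 0 ∧ ∀ Q : MvPolynomial (Fin 3) ℂ, Q.IsHomogeneous d →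
      substMat h (normForm Γ Q) = χ • normForm Γ Q := by
  let h' : Γ := ⟨toPGL3 h, hh⟩
  have hlift (γ : Γ) : ∃ l : ℂ, l ≠ 0 ∧ (unimodularLift γ : Matrix (Fin 3) (Fin 3) ℂ) * h =
      l • (unimodularLift (γ * h' : Γ) : Matrix (Fin 3) (Fin 3) ℂ) := by
    rw [← Matrix.SpecialLinearGroup.coe_mul]
    apply exists_eq_smul_of_toPGL3_eq
    rw [map_mul, toPGL3_unimodularLift, toPGL3_unimodularLift, Subgroup.coe_mul]
  choose l hl0 hl using hlift
  refine ⟨∏ γ, l γ ^ d, Finset.prod_ne_zero_iff.2 fun γ _ ↦ pow_ne_zero d (hl0 γ), fun Q hQ ↦ ?_⟩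
  calc substMat h (normForm Γ Q)
      = ∏ γ : Γ, l γ ^ d • substMat (unimodularLift (γ * h' : Γ)) Q := by
        rw [normForm, map_prod]
        exact Finset.prod_congr rfl fun γ _ ↦ by rw [substMat_substMat, hl, substMat_smul hQ]
    _ = (∏ γ, l γ ^ d) • ∏ γ : Γ, substMat (unimodularLift (γ * h' : Γ)) Q := Finset.prod_smul _ _ _
    _ = (∏ γ, l γ ^ d) • normForm Γ Q := congrArg _ <|
        Equiv.prod_comp (Equiv.mulRight h') fun γ : Γ ↦ substMat (unimodularLift γ) Q

theorem comap_toPGL3_le_hypersurfaceStabilizer {ι : Type*} [Fintype ι]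
    {Q : ι → MvPolynomial (Fin 3) ℂ} (hQ : ∀ i, (Q i).IsHomogeneous d) (t : ι → ℂ) :
    Γ.comap toPGL3 ≤ hypersurfaceStabilizer (∑ i, t i • normForm Γ (Q i)) := by
  intro h hh
  obtain ⟨χ, hχ, hnorm⟩ := exists_forall_substMat_normForm Γ d hh
  refine mem_hypersurfaceStabilizer_iff_substMat.2 ⟨χ, hχ, ?_⟩
  simp_rw [map_sum, map_smul, hnorm _ (hQ _), Finset.smul_sum, smul_comm χ]

variable {Γ}

theorem toPGL3_eq_of_substMat_dvd_substMat (hQ : Irreducible Q)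
    (hstab : hypersurfaceStabilizer Q ≤ Subgroup.center SL(3, ℂ)) {g h : SL(3, ℂ)}
    (hgh : substMat g Q ∣ substMat h Q) : toPGL3 g = toPGL3 h := by
  have hirr (k : SL(3, ℂ)) : Irreducible (substMat k Q) :=
    irreducible_substMat hQ (Matrix.SpecialLinearGroup.toGL k).isUnit
  obtain ⟨u, hu⟩ := (hirr g).associated_of_dvd (hirr h) hgh
  obtain ⟨r, hr, hur⟩ := isUnit_iff_eq_C_of_isReduced.1 u.isUnit
  have hmem : h * g⁻¹ ∈ hypersurfaceStabilizer Q := by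
    refine mem_hypersurfaceStabilizer_iff_substMat.2 ⟨r, hr.ne_zero, ?_⟩
    rw [Matrix.SpecialLinearGroup.coe_mul, ← substMat_substMat, ← hu, hur, mul_comm,
      ← smul_eq_C_mul, map_smul, substMat_substMat, ← Matrix.SpecialLinearGroup.coe_mul,
      mul_inv_cancel, Matrix.SpecialLinearGroup.coe_one, substMat_one]
  have hker : toPGL3 (h * g⁻¹) = 1 := MonoidHom.mem_ker.1 (ker_toPGL3 ▸ hstab hmem)
  rw [map_mul, map_inv, mul_inv_eq_one] at hker
  exact hker.symm

theorem hypersurfaceStabilizer_normForm_le (hQ : Irreducible Q)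
    (hstab : hypersurfaceStabilizer Q ≤ Subgroup.center SL(3, ℂ)) :
    hypersurfaceStabilizer (normForm Γ Q) ≤ Γ.comap toPGL3 := by
  intro h hh
  obtain ⟨c, hc, hnorm⟩ := mem_hypersurfaceStabilizer_iff_substMat.1 hh
  let o : SL(3, ℂ) := unimodularLift (1 : Γ)
  have hprime : Prime (substMat ↑(o * h) Q) :=
    (irreducible_substMat hQ (Matrix.SpecialLinearGroup.toGL (o * h)).isUnit).prime
  have hdvd : substMat ↑(o * h) Q ∣ normForm Γ Q := by
    have hunit : IsUnit (C c : MvPolynomial (Fin 3) ℂ) := hc.isUnit.map C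
    rw [← hunit.dvd_mul_left, ← smul_eq_C_mul, ← hnorm, normForm, map_prod,
      Matrix.SpecialLinearGroup.coe_mul, ← substMat_substMat]
    exact Finset.dvd_prod_of_mem (fun γ : Γ ↦ substMat h (substMat (unimodularLift γ) Q))
      (Finset.mem_univ 1)
  obtain ⟨γ, -, hγ⟩ := hprime.exists_mem_finset_dvd hdvd
  have hγh := toPGL3_eq_of_substMat_dvd_substMat hQ hstab hγ
  rw [map_mul, toPGL3_unimodularLift, toPGL3_unimodularLift, Subgroup.coe_one, one_mul] at hγh
  exact Subgroup.mem_comap.2 (hγh ▸ γ.2)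

theorem orderAt_normForm_le (hQ : SmoothCurve Q) {p : Fin 3 → ℂ} (hp : p ≠ 0) :
    orderAt p (normForm Γ Q) ≤ Fintype.card Γ := by
  have hone (γ : Γ) : orderAt p (substMat (unimodularLift γ) Q) ≤ 1 := by
    have hsmooth := smoothCurve_substMat hQ (isUnit_coe_unimodularLift γ)
    obtain ⟨v, hv⟩ := not_forall.1 (mt (hsmooth p) hp)
    exact orderAt_le_one hv
  calc orderAt p (normForm Γ Q) = ∑ γ : Γ, orderAt p (substMat (unimodularLift γ) Q) :=
        orderAt_prod _ _ _
    _ ≤ ∑ _ : Γ, 1 := Finset.sum_le_sum fun γ _ ↦ hone γ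
    _ = Fintype.card Γ := by simp

theorem eq_zero_of_forall_eval_normForm_linForm_pow_eq_zero {p : Fin 3 → ℂ}
    (hp : ∀ k : Fin (2 * Fintype.card Γ + 1),
      eval p (normForm Γ (linForm ![1, (k : ℂ), (k : ℂ) ^ 2] ^ d)) = 0) : p = 0 := by
  let v (γ : Γ) : Fin 3 → ℂ := (unimodularLift γ : Matrix (Fin 3) (Fin 3) ℂ) *ᵥ p
  let f (γ : Γ) : Polynomial ℂ :=
    Polynomial.C (v γ 0) + Polynomial.C (v γ 1) * Polynomial.X +
      Polynomial.C (v γ 2) * Polynomial.X ^ 2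
  have hdeg : (∏ γ, f γ).natDegree ≤ 2 * Fintype.card Γ := by
    have hquad (γ : Γ) : (f γ).natDegree ≤ 2 := by
      unfold f
      compute_degree
    refine (Polynomial.natDegree_prod_le _ _).trans ((Finset.sum_le_sum fun γ _ ↦ hquad γ).trans ?_)
    simp [mul_comm]
  have hprod : ∏ γ, f γ = 0 := by
    refine Polynomial.eq_zero_of_natDegree_lt_card_of_eval_eq_zero _
      (f := fun k : Fin (2 * Fintype.card Γ + 1) ↦ ((k : ℕ) : ℂ))
      (Nat.cast_injective.comp Fin.val_injective) (fun k ↦ ?_) ?_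
    · have hk := hp k
      rw [eval_normForm, Finset.prod_eq_zero_iff] at hk
      obtain ⟨γ, hγ, hzero⟩ := hk
      rw [map_pow, eval_linForm] at hzero
      rw [Polynomial.eval_prod]
      refine Finset.prod_eq_zero hγ (Eq.trans ?_ (eq_zero_of_pow_eq_zero hzero))
      simp [f, v, Fin.sum_univ_succ, dotProduct]
      ring
    · rw [Fintype.card_fin]
      lia
  obtain ⟨γ, -, hγ⟩ := Finset.prod_eq_zero_iff.1 hprod
  have hcoeff (i : ℕ) : (f γ).coeff i = 0 := by rw [hγ, Polynomial.coeff_zero]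
  have hv : v γ = 0 := by
    ext i
    fin_cases i
    · simpa [f] using hcoeff 0
    · simpa [f] using hcoeff 1
    · simpa [f] using hcoeff 2
  exact mulVec_injective_of_isUnit (isUnit_coe_unimodularLift γ) (hv.trans (mulVec_zero _).symm)

end NormForm

/-- The rigid quartic together with `2 m + 1` fourth powers of linear forms. The coefficient
vectors of the latter lie on a conic, so that at most two of the forms vanish at a given nonzero
point; hence the norms of these quartics under a group of order `m` have no common zero but `0`. -/
def quarticFamily (m : ℕ) : Option (Fin (2 * m + 1)) → MvPolynomial (Fin 3) ℂ
  | none => rigidQuartic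
  | some k => linForm ![1, (k : ℂ), (k : ℂ) ^ 2] ^ 4

theorem isHomogeneous_quarticFamily (m : ℕ) : ∀ i, (quarticFamily m i).IsHomogeneous 4
  | none => isHomogeneous_rigidQuartic
  | some _ => (isHomogeneous_linForm _).pow 4

section PerturbedNorm

open Topology

variable (Γ : Subgroup PGL3) [Fintype Γ]

theorem dense_smoothCurve_sum_smul_normForm :
    Dense {t : Option (Fin (2 * Fintype.card Γ + 1)) → ℂ |
      SmoothCurve (∑ i, t i • normForm Γ (quarticFamily (Fintype.card Γ) i))} :=
  dense_smooth_members (mul_ne_zero four_ne_zero Fintype.card_ne_zero)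
    (fun i ↦ isHomogeneous_normForm Γ (isHomogeneous_quarticFamily _ i)) fun _ hq ↦
      eq_zero_of_forall_eval_normForm_linForm_pow_eq_zero fun k ↦ hq (some k)

theorem hypersurfaceStabilizer_normForm_rigidQuartic :
    hypersurfaceStabilizer (normForm Γ rigidQuartic) = Γ.comap toPGL3 := by
  refine le_antisymm (hypersurfaceStabilizer_normForm_le irreducible_rigidQuartic
    hypersurfaceStabilizer_rigidQuartic_le_center) ?_
  simpa using comap_toPGL3_le_hypersurfaceStabilizer Γ
    (fun _ : Unit ↦ isHomogeneous_rigidQuartic) 1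

theorem eventually_hypersurfaceStabilizer_sum_smul_normForm_eq :
    ∀ᶠ t : Option (Fin (2 * Fintype.card Γ + 1)) → ℂ in 𝓝 (Pi.single none 1),
      hypersurfaceStabilizer (∑ i, t i • normForm Γ (quarticFamily (Fintype.card Γ) i)) =
        Γ.comap toPGL3 := by
  let F (i) := normForm Γ (quarticFamily (Fintype.card Γ) i)
  have hF₀ : ∑ i, (Pi.single none 1 : _ → ℂ) i • F i = normForm Γ rigidQuartic := by
    simp [F, quarticFamily]
  have hstab₀ := hF₀ ▸ hypersurfaceStabilizer_normForm_rigidQuartic Γ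
  have hdeg : 2 * Fintype.card Γ < 4 * Fintype.card Γ := by linarith [Fintype.card_pos (α := Γ)]
  have := finite_comap_toPGL3 Γ
  rw [← hstab₀] at this ⊢
  refine eventually_hypersurfaceStabilizer_eq hdeg
    (fun i ↦ isHomogeneous_normForm Γ (isHomogeneous_quarticFamily _ i))
    (fun p hp ↦ hF₀ ▸ orderAt_normForm_le smoothCurve_rigidQuartic hp) fun t ↦ ?_
  exact hstab₀.trans_le
    (comap_toPGL3_le_hypersurfaceStabilizer Γ (isHomogeneous_quarticFamily _) t)

end PerturbedNorm

/-- **Statement 17.** Any finite subgroup `Γ ⊆ PGL₃(ℂ)` of order `m` is the full stabilizer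
of some smooth plane curve of degree `4m`: there is a homogeneous polynomial `Φ` of degree
`4m` defining a smooth curve such that `g ∈ PGL₃(ℂ)` stabilizes the curve `Φ = 0` if and
only if `g ∈ Γ`. -/
theorem finite_subgroup_is_stabilizer (m : ℕ) (Γ : Subgroup PGL3) [Finite Γ]
    (hm : Nat.card Γ = m) :
    ∃ Φ : MvPolynomial (Fin 3) ℂ, Φ.IsHomogeneous (4 * m) ∧ SmoothCurve Φ ∧
      ∀ g : PGL3, ProjStab Φ g ↔ g ∈ Γ := by
  cases nonempty_fintype Γ
  obtain ⟨t, hsmooth, hstab⟩ := (dense_smoothCurve_sum_smul_normForm Γ).inter_nhds_nonempty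
    (eventually_hypersurfaceStabilizer_sum_smul_normForm_eq Γ)
  have hhom : (∑ i, t i • normForm Γ (quarticFamily _ i)).IsHomogeneous (4 * m) := by
    rw [← hm, Nat.card_eq_fintype_card]
    exact (homogeneousSubmodule (Fin 3) ℂ _).sum_smul_mem t fun i _ ↦
      isHomogeneous_normForm Γ (isHomogeneous_quarticFamily _ i)
  refine ⟨_, hhom, hsmooth, fun γ ↦ ?_⟩
  obtain ⟨g, rfl⟩ := toPGL3_surjective γ
  rw [projStab_toPGL3_iff hhom, hstab.out, Subgroup.mem_comap]
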